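/- Let P be a finite poset. For S ⊆ {1,…,ht P}, let P̃_S denote the poset obtained by restricting P to elements whose height is not in S. Then depth k[O(P)] = min{ i + |S| : H̃_{i−1}(O(P̃_S); k) ≠ 0 }. In particular, for any simplicial complex Δ, one computes depth k[Δ] by applying this formula to the face poset of Δ. -/

import Mathlib

open Finset

/-- An abstract simplicial complex on vertex type `V`, given by a finite, downward closed
family of finite subsets of `V` (its faces). -/
structure SComplex (V : Type) [DecidableEq V] where
  faces : Finset (Finset V)
  down_closed : ∀ ⦃s t : Finset V⦄, s ∈ faces → t ⊆ s → t ∈ faces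

namespace SComplex

variable {V : Type} [DecidableEq V]

/-- `K.rank = d = dim k[Δ] = dim Δ + 1` is the maximal cardinality of a face of `K`. -/
def rank (K : SComplex V) : ℕ := K.faces.sup Finset.card

/-- `F` is a facet (maximal face) of `K`. -/
def IsFacet (K : SComplex V) (F : Finset V) : Prop :=
  F ∈ K.faces ∧ ∀ G ∈ K.faces, F ⊆ G → F = G

/-- `K` is pure: all facets have the maximal cardinality `K.rank`. -/
def Pure (K : SComplex V) : Prop := ∀ F : Finset V, K.IsFacet F → F.card = K.rank

/-- The link `lk_K(T) = {G ∈ K | T ∪ G ∈ K, T ∩ G = ∅}`. -/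
def link (K : SComplex V) (T : Finset V) : SComplex V where
  faces := K.faces.filter fun G => Disjoint T G ∧ T ∪ G ∈ K.faces
  down_closed := by
    intro s t hs hts
    simp only [Finset.mem_filter] at hs ⊢
    exact ⟨K.down_closed hs.1 hts, hs.2.1.mono_right hts,
      K.down_closed hs.2.2 (Finset.union_subset_union_right hts)⟩

/-- The anti-star `ast_K(T) = {G ∈ K | T ∩ G = ∅}`. -/
def antistar (K : SComplex V) (T : Finset V) : SComplex V where
  faces := K.faces.filter fun G => Disjoint T G
  down_closed := by
    intro s t hs hts
    simp only [Finset.mem_filter] at hs ⊢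
    exact ⟨K.down_closed hs.1 hts, hs.2.mono_right hts⟩

/-- The induced subcomplex of `K` on a set `W` of vertices. -/
def restrict (K : SComplex V) (W : Finset V) : SComplex V where
  faces := K.faces.filter fun G => G ⊆ W
  down_closed := by
    intro s t hs hts
    simp only [Finset.mem_filter] at hs ⊢
    exact ⟨K.down_closed hs.1 hts, hts.trans hs.2⟩

/-- The subcomplex of faces of cardinality at most `m`; as cardinality = dimension + 1, this is
the `(m-1)`-skeleton `Δ^{(m-1)}`. -/
def skelCard (K : SComplex V) (m : ℕ) : SComplex V where
  faces := K.faces.filter fun G => G.card ≤ m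
  down_closed := by
    intro s t hs hts
    simp only [Finset.mem_filter] at hs ⊢
    exact ⟨K.down_closed hs.1 hts, le_trans (Finset.card_le_card hts) hs.2⟩

/-- `K.trunc j` is `[Δ]_{>j}`, the order complex of the poset of faces of `K` of cardinality
(equivalently, of height in the face poset) `> j`: its faces are the chains of such faces.
For `j = 0` this is the barycentric subdivision of `K`. -/
def trunc (K : SComplex V) (j : ℕ) : SComplex (Finset V) where
  faces := K.faces.powerset.filter fun C =>
    (∀ s ∈ C, j < s.card) ∧ ∀ s ∈ C, ∀ t ∈ C, s ⊆ t ∨ t ⊆ s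
  down_closed := by
    intro s t hs hts
    simp only [Finset.mem_powerset, Finset.mem_filter] at hs ⊢
    exact ⟨hts.trans hs.1, fun a ha => hs.2.1 a (hts ha),
      fun a ha b hb => hs.2.2 a (hts ha) b (hts hb)⟩

/-- `Δ_A`: the complex obtained from `K` by deleting all faces containing a member of `A`. -/
def deleteAbove (K : SComplex V) (A : Finset (Finset V)) : SComplex V where
  faces := K.faces.filter fun s => ∀ τ ∈ A, ¬ τ ⊆ s
  down_closed := by
    intro s t hs hts
    simp only [Finset.mem_filter] at hs ⊢
    exact ⟨K.down_closed hs.1 hts, fun τ hτ hsub => hs.2 τ hτ (hsub.trans hts)⟩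

/-- The number of faces of `K` of cardinality `i`, i.e. the face number `f_{i-1}(K)`. -/
def faceCount (K : SComplex V) (i : ℕ) : ℕ := (K.faces.filter fun s => s.card = i).card

/-- The Euler characteristic `χ(K) = Σ_{i ≥ 0} (-1)^i f_i(K)`. -/
def eulerChar (K : SComplex V) : ℤ :=
  ∑ s ∈ K.faces.filter (fun s => s ≠ ∅), (-1 : ℤ) ^ (s.card - 1)

/-- The reduced Euler characteristic `χ̃(K) = χ(K) - 1`. -/
def reducedEulerChar (K : SComplex V) : ℤ := eulerChar K - 1

end SComplex

/-! ### Simplicial homology with coefficients in a field `k` -/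

/-- An arbitrary linear order on a finite type. -/
noncomputable def arbOrder (V : Type) [Fintype V] : LinearOrder V :=
  LinearOrder.lift' (Fintype.equivFin V) (Equiv.injective _)

namespace SComplex

variable {V : Type} [DecidableEq V]

/-- The faces of `K` of cardinality `n`, as a type. -/
def Faces (K : SComplex V) (n : ℕ) : Type :=
  {s : Finset V // s ∈ K.faces ∧ s.card = n}

/-- The space of reduced simplicial `n`-chains of `K`: formal `k`-linear combinations of the
faces of cardinality `n` (such a face has dimension `n - 1`; the empty face sits in degree `0`,
which produces *reduced* homology). -/
abbrev ChainsOf (k : Type) [Field k] (K : SComplex V) (n : ℕ) : Type := Faces K n →₀ k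

variable (k : Type) [Field k] [Fintype V]

/-- The simplicial boundary map, with signs determined by an arbitrary but fixed linear order
on the vertices. -/
noncomputable def bd (K : SComplex V) (n : ℕ) :
    ChainsOf k K n →ₗ[k] ChainsOf k K (n - 1) :=
  letI : LinearOrder V := arbOrder V
  Finsupp.lsum k fun s : Faces K n =>
    LinearMap.toSpanSingleton k (ChainsOf k K (n - 1))
      (∑ x ∈ s.1.attach,
        ((-1 : k) ^ (s.1.filter (fun y => y < x.1)).card) •
          Finsupp.single
            (⟨s.1.erase x.1,
              K.down_closed s.2.1 (Finset.erase_subset _ _),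
              by rw [Finset.card_erase_of_mem x.2, s.2.2]⟩ : Faces K (n - 1))
            (1 : k))

/-- `HVanish k K i` says that the reduced simplicial homology `H̃_{i-1}(K; k)` vanishes.
Note the indexing convention: the index `i` is the *cardinality* of the relevant faces, so this
is reduced homology in topological degree `i - 1`; e.g. `HVanish k K 1` says `H̃₀(K; k) = 0`
(`K` is connected and nonempty) and `HVanish k K 0` says `H̃₋₁(K; k) = 0` (`K` has a face).
Since the cycles in degree `i - 1` are `ker ∂ᵢ` and the boundaries are `im ∂ᵢ₊₁`, and the
boundaries are always contained in the cycles, vanishing of homology says exactly that every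
cycle is a boundary. -/
def HVanish (K : SComplex V) (i : ℕ) : Prop :=
  LinearMap.ker (bd k K i) ≤ LinearMap.range (bd k K (i + 1))

/-- `redHomologyRank k K i` is the dimension `dim_k H̃_{i-1}(K; k)` of the reduced simplicial
homology of `K` in topological degree `i - 1` (cardinality index `i`), namely the dimension of
the cycles `ker ∂ᵢ` modulo the boundaries `im ∂ᵢ₊₁`. -/
noncomputable def redHomologyRank (K : SComplex V) (i : ℕ) : ℕ :=
  Module.finrank k ↥(LinearMap.ker (bd k K i)) -
    Module.finrank k ↥(LinearMap.range (bd k K (i + 1)) ⊓ LinearMap.ker (bd k K i))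

end SComplex

/-! ### Depth, Serre conditions, and Stanley–Reisner rings -/

/-- The length of a longest regular sequence on `R` contained in the ideal `I`
(the `I`-depth of `R`). -/
noncomputable def depthIn (R : Type) [CommRing R] (I : Ideal R) : ℕ :=
  sSup {n : ℕ | ∃ rs : List R, rs.length = n ∧ (∀ r ∈ rs, r ∈ I) ∧
    RingTheory.Sequence.IsRegular R rs}

/-- Serre's condition `(S_ℓ)` for a commutative ring:
`depth R_p ≥ min {ℓ, dim R_p}` for every prime `p`. -/
def SerreCondS (ℓ : ℕ) (R : Type) [CommRing R] : Prop :=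
  ∀ (p : Ideal R) (hp : p.IsPrime),
    haveI := hp
    min ((ℓ : ℕ∞) : WithBot ℕ∞) (ringKrullDim (Localization.AtPrime p)) ≤
      ((depthIn (Localization.AtPrime p)
        (IsLocalRing.maximalIdeal (Localization.AtPrime p)) : ℕ∞) : WithBot ℕ∞)

namespace SComplex

variable {V : Type} [DecidableEq V] (k : Type) [Field k]

/-- The Stanley–Reisner ideal of `K`: generated by the squarefree monomials supported on
non-faces. -/
noncomputable def srIdeal (K : SComplex V) : Ideal (MvPolynomial V k) :=
  Ideal.span ((fun s : Finset V => ∏ v ∈ s, MvPolynomial.X v) '' {s : Finset V | s ∉ K.faces})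

/-- The Stanley–Reisner ring `k[Δ]`. -/
noncomputable abbrev SRRing (K : SComplex V) : Type := MvPolynomial V k ⧸ srIdeal k K

/-- `depth k[Δ]`: the depth of the Stanley–Reisner ring with respect to its irrelevant
(graded maximal) ideal. -/
noncomputable def srDepth (K : SComplex V) : ℕ :=
  depthIn (SRRing k K)
    (Ideal.span (Set.range fun v : V => Ideal.Quotient.mk (srIdeal k K) (MvPolynomial.X v)))

/-- `k[Δ]` satisfies Serre's condition `(S_ℓ)`. -/
def SerreS (ℓ : ℕ) (K : SComplex V) : Prop := SerreCondS ℓ (SRRing k K)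

end SComplex

/-! ### Order complexes of finite posets -/

/-- The order complex `O(P)` of a finite poset: its faces are the chains of `P`. -/
def orderComplex (P : Type) [DecidableEq P] [Fintype P] [PartialOrder P]
    [∀ a b : P, Decidable (a ≤ b)] : SComplex P where
  faces := Finset.univ.filter fun C : Finset P => ∀ a ∈ C, ∀ b ∈ C, a ≤ b ∨ b ≤ a
  down_closed := by
    intro s t hs hts
    simp only [Finset.mem_filter, Finset.mem_univ, true_and] at hs ⊢
    exact fun a ha b hb => hs a (hts ha) b (hts hb)

/-- The height of an element of a finite poset: the maximal cardinality of a chain with top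
element `p` (so minimal elements have height `1`). -/
def pheight {P : Type} [DecidableEq P] [Fintype P] [PartialOrder P]
    [∀ a b : P, Decidable (a ≤ b)] (p : P) : ℕ :=
  Finset.sup (Finset.univ.filter fun C : Finset P =>
    p ∈ C ∧ (∀ a ∈ C, a ≤ p) ∧ ∀ a ∈ C, ∀ b ∈ C, a ≤ b ∨ b ≤ a) Finset.card

/-- The height `ht P` of a finite poset: the maximal cardinality of a chain. -/
def pheightMax (P : Type) [DecidableEq P] [Fintype P] [PartialOrder P]
    [∀ a b : P, Decidable (a ≤ b)] : ℕ :=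
  Finset.univ.sup (pheight (P := P))

/-- `O(P_{>j})`: the full subcomplex of the order complex on the elements of height `> j`. -/
def ocAbove (P : Type) [DecidableEq P] [Fintype P] [PartialOrder P]
    [∀ a b : P, Decidable (a ≤ b)] (j : ℕ) : SComplex P :=
  (orderComplex P).restrict (Finset.univ.filter fun p => j < pheight p)

/-- The face poset `F(Δ)` of a simplicial complex: the nonempty faces, ordered by inclusion. -/
abbrev SComplex.FacePoset {V : Type} [DecidableEq V] (K : SComplex V) : Type :=
  {s : Finset V // s ∈ K.faces ∧ s ≠ ∅}

instance {V : Type} [DecidableEq V] (K : SComplex V) :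
    ∀ a b : K.FacePoset, Decidable (a ≤ b) := fun a b =>
  decidable_of_iff (a.1 ≤ b.1) Subtype.coe_le_coe

/-!
Colour the vertices of a simplicial complex `K` so that no face has two vertices of the same
colour, as the heights do for an order complex, and let `θ j` be the sum of the variables of
colour `j`. The ideal of `k[K]` generated by the `θ j` has the same radical as the irrelevant
ideal, so that the depth is the least degree in which the Koszul cohomology of `k[K]` with respect
to `θ` is nonzero. Modulo coboundaries every Koszul cocycle is supported on squarefree multidegrees,
and there the Koszul complex is the direct sum, over the sets `S` of colours, of the cochain
complexes of the subcomplexes of `K` on the vertices with colour outside `S`, shifted by `|S|`.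

Barycentric subdivision is a sequence of stellar subdivisions. Gluing a cone over the star of a face
`F` to `K` gives a complex from which both `K` and its stellar subdivision at `F` are obtained by
deleting the star of a face; the two stars agree and are cones, and the long exact sequences of
Koszul cohomology show that the depth does not change.
-/

/-! ### Koszul cohomology -/

section Koszul

open scoped Pointwise

variable {ι R M N L : Type*}

/-- The sign of `j` relative to `T`: `-1` to the number of elements of `T` that `o` enumerates
before `j`. Enumerations `o : ι → ℕ` replace linear orders on the index types, whose decidable
equality is already fixed. -/
def koszulSign (o : ι → ℕ) (T : Finset ι) (j : ι) : ℤ :=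
  (-1) ^ #{l ∈ T | o l < o j}

theorem koszulSign_eq_prod (o : ι → ℕ) (T : Finset ι) (j : ι) :
    koszulSign o T j = ∏ l ∈ T, if o l < o j then -1 else 1 := by
  simp [koszulSign, prod_ite]

theorem koszulSign_mul_self (o : ι → ℕ) (T : Finset ι) (j : ι) :
    koszulSign o T j * koszulSign o T j = 1 := by
  rw [koszulSign, ← mul_pow, neg_one_mul, neg_neg, one_pow]

variable [DecidableEq ι]

theorem koszulSign_eq_mul_erase (o : ι → ℕ) {T : Finset ι} {j : ι} (hj : j ∈ T) (l : ι) :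
    koszulSign o T l = (if o j < o l then -1 else 1) * koszulSign o (T.erase j) l := by
  simp only [koszulSign_eq_prod, mul_prod_erase T (fun m => if o m < o l then (-1 : ℤ) else 1) hj]

theorem koszulSign_anticomm (o : ι ↪ ℕ) {T : Finset ι} {j l : ι}
    (hj : j ∈ T) (hl : l ∈ T) (hjl : j ≠ l) :
    koszulSign o T j * koszulSign o (T.erase j) l =
      -(koszulSign o T l * koszulSign o (T.erase l) j) := by
  rw [koszulSign_eq_mul_erase o hl, koszulSign_eq_mul_erase o hj l]
  rcases lt_or_gt_of_ne (o.injective.ne hjl) with h | h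
  · rw [if_pos h, if_neg h.not_gt]; ring
  · rw [if_neg h.not_gt, if_pos h]; ring

theorem koszulSign_anticomm' (o : ι ↪ ℕ) {T : Finset ι} {j l : ι}
    (hj : j ∈ T) (hl : l ∈ T) (hjl : j ≠ l) :
    koszulSign o T j * koszulSign o T l =
      -(koszulSign o (T.erase j) l * koszulSign o (T.erase l) j) := by
  have hT := koszulSign_mul_self o T l
  have hE := koszulSign_mul_self o (T.erase j) l
  linear_combination
    (koszulSign o (T.erase j) l * koszulSign o T l) * koszulSign_anticomm o hj hl hjl
      - (koszulSign o T j * koszulSign o T l) * hE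
      - (koszulSign o (T.erase j) l * koszulSign o (T.erase l) j) * hT

variable [CommRing R] [AddCommGroup M] [Module R M] [AddCommGroup N] [Module R N]
  [AddCommGroup L] [Module R L]

/-- The differential of the Koszul cochain complex of a module with respect to the family `θ`. A
cochain is a function on all finite sets of indices; its part of degree `i` consists of the values
on the sets of cardinality `i`. -/
def koszulD (o : ι ↪ ℕ) (θ : ι → R) : (Finset ι → M) →ₗ[R] Finset ι → M :=
  LinearMap.pi fun T => ∑ j ∈ T, koszulSign o T j • θ j • LinearMap.proj (T.erase j)

/-- The Koszul cohomology of `M` with respect to `θ` vanishes in degree `i`. -/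
def KoszulVanish (o : ι ↪ ℕ) (θ : ι → R) (M : Type*) [AddCommGroup M] [Module R M]
    (i : ℕ) : Prop :=
  ∀ f : Finset ι → M, (∀ T, #T = i + 1 → koszulD o θ f T = 0) →
    ∃ g : Finset ι → M, ∀ T, #T = i → f T = koszulD o θ g T

theorem koszulD_apply (o : ι ↪ ℕ) (θ : ι → R) (f : Finset ι → M) (T : Finset ι) :
    koszulD o θ f T = ∑ j ∈ T, koszulSign o T j • θ j • f (T.erase j) := by
  simp [koszulD]

theorem koszulVanish_algebraMap_iff (o : ι ↪ ℕ) {S : Type*} [CommRing S] [Algebra R S] [Module S M]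
    [IsScalarTower R S M] {θ : ι → R} {i : ℕ} :
    KoszulVanish o (fun j => algebraMap R S (θ j)) M i ↔ KoszulVanish o θ M i := by
  simp only [KoszulVanish, koszulD_apply, algebraMap_smul]

theorem koszulD_map (o : ι ↪ ℕ) (θ : ι → R) (a : M →ₗ[R] N) (f : Finset ι → M) (T : Finset ι) :
    koszulD o θ (fun T => a (f T)) T = a (koszulD o θ f T) := by
  simp [koszulD_apply]

theorem koszulD_congr (o : ι ↪ ℕ) (θ : ι → R) {f g : Finset ι → M} {i : ℕ}
    (h : ∀ T, #T = i → f T = g T) {T : Finset ι} (hT : #T = i + 1) :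
    koszulD o θ f T = koszulD o θ g T := by
  simp only [koszulD_apply]
  exact sum_congr rfl fun j hj => by rw [h _ (by rw [card_erase_of_mem hj, hT]; rfl)]

theorem koszulD_koszulD (o : ι ↪ ℕ) (θ : ι → R) (f : Finset ι → M) :
    koszulD o θ (koszulD o θ f) = 0 := by
  ext T
  simp only [koszulD_apply, smul_sum, Pi.zero_apply]
  rw [sum_sigma']
  -- The terms for `(j, l)` and `(l, j)` cancel.
  refine sum_involution (fun x _ => ⟨x.2, x.1⟩) ?_ ?_ ?_ fun _ _ => rfl
  · rintro ⟨j, l⟩ h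
    simp only [mem_sigma, mem_erase] at h
    rw [erase_right_comm, smul_comm (θ j) (koszulSign _ _ _), smul_comm (θ l) (koszulSign _ _ _),
      smul_comm (θ j) (θ l)]
    simp only [smul_smul]
    rw [koszulSign_anticomm o h.1 h.2.2 (Ne.symm h.2.1), neg_smul, neg_add_cancel]
  · rintro ⟨j, l⟩ h _ he
    simp only [mem_sigma, mem_erase] at h
    exact h.2.1 (congrArg Sigma.fst he)
  · rintro ⟨j, l⟩ h
    simp only [mem_sigma, mem_erase] at h ⊢
    exact ⟨h.2.2, Ne.symm h.2.1, h.1⟩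

/-- Contraction of Koszul cochains along the index `j`, followed by the additive map `B`. -/
def koszulContract (o : ι ↪ ℕ) (j : ι) (B : M →+ M) (f : Finset ι → M) (T : Finset ι) : M :=
  if j ∈ T then 0 else koszulSign o (insert j T) j • B (f (insert j T))

theorem koszulContract_of_mem {o : ι ↪ ℕ} {j : ι} {T : Finset ι} (hj : j ∈ T) (B : M →+ M)
    (f : Finset ι → M) : koszulContract o j B f T = 0 :=
  if_pos hj

theorem koszulContract_of_notMem {o : ι ↪ ℕ} {j : ι} {T : Finset ι} (hj : j ∉ T) (B : M →+ M)
    (f : Finset ι → M) :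
    koszulContract o j B f T = koszulSign o (insert j T) j • B (f (insert j T)) :=
  if_neg hj

theorem koszulD_koszulContract_of_mem (o : ι ↪ ℕ) (θ : ι → R) {j : ι} (B : M →+ M)
    (f : Finset ι → M) {T : Finset ι} (hj : j ∈ T) :
    koszulD o θ (koszulContract o j B f) T = θ j • B (f T) := by
  rw [koszulD_apply, sum_eq_single_of_mem j hj fun l _ hl => by
    rw [koszulContract_of_mem (mem_erase.2 ⟨hl.symm, hj⟩), smul_zero, smul_zero]]
  rw [koszulContract_of_notMem (notMem_erase j T), insert_erase hj, smul_comm (θ j), smul_smul,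
    koszulSign_mul_self, one_smul]

theorem koszulD_koszulContract_add_of_notMem (o : ι ↪ ℕ) {θ : ι → R} {j : ι} {B : M →+ M}
    (hB : ∀ l ≠ j, ∀ x, B (θ l • x) = θ l • B x) (f : Finset ι → M) {T : Finset ι}
    (hj : j ∉ T) :
    koszulD o θ (koszulContract o j B f) T + koszulContract o j B (koszulD o θ f) T =
      B (θ j • f T) := by
  rw [koszulContract_of_notMem hj, koszulD_apply, koszulD_apply, sum_insert hj, map_add, smul_add,
    erase_insert hj, map_zsmul, smul_smul, koszulSign_mul_self, one_smul, map_sum, smul_sum,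
    add_left_comm, ← sum_add_distrib, add_eq_left]
  refine sum_eq_zero fun l hl => ?_
  have hlj : l ≠ j := fun h => hj (h ▸ hl)
  rw [koszulContract_of_notMem fun h => hj (mem_of_mem_erase h), ← erase_insert_of_ne hlj.symm,
    map_zsmul, hB l hlj, smul_comm (θ l), smul_smul, smul_smul,
    koszulSign_anticomm' o (mem_insert_self j T) (mem_insert_of_mem hl) hlj.symm, erase_insert hj,
    neg_smul, add_neg_cancel]

theorem koszulD_koszulContract (o : ι ↪ ℕ) {θ : ι → R} {j : ι} {B : M →+ M}
    (hB : ∀ l ≠ j, ∀ x, B (θ l • x) = θ l • B x) {f : Finset ι → M} {i : ℕ}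
    (hf : ∀ T, #T = i + 1 → koszulD o θ f T = 0) {T : Finset ι} (hT : #T = i) :
    koszulD o θ (koszulContract o j B f) T = if j ∈ T then θ j • B (f T) else B (θ j • f T) := by
  split_ifs with hj
  · exact koszulD_koszulContract_of_mem o θ B f hj
  · rw [← koszulD_koszulContract_add_of_notMem o hB f hj, left_eq_add,
      koszulContract_of_notMem hj, hf _ (by rw [card_insert_of_notMem hj, hT]), map_zero, smul_zero]

/-- Multiplication by an element of the ideal generated by `θ` is null-homotopic. -/
theorem exists_smul_eq_koszulD (o : ι ↪ ℕ) {θ : ι → R} {f : Finset ι → M} {i : ℕ}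
    (hf : ∀ T, #T = i + 1 → koszulD o θ f T = 0) {r : R} (hr : r ∈ Ideal.span (Set.range θ)) :
    ∃ g : Finset ι → M, ∀ T, #T = i → r • f T = koszulD o θ g T := by
  induction hr using Submodule.span_induction with
  | mem x h =>
    obtain ⟨j, rfl⟩ := h
    exact ⟨koszulContract o j (.id M) f, fun T hT => by
      rw [koszulD_koszulContract o (fun _ _ _ => rfl) hf hT]; exact (ite_self _).symm⟩
  | zero => exact ⟨0, fun T _ => by rw [map_zero, zero_smul, Pi.zero_apply]⟩
  | add x y _ _ hx hy =>
    obtain ⟨g, hg⟩ := hx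
    obtain ⟨g', hg'⟩ := hy
    exact ⟨g + g', fun T hT => by rw [map_add, add_smul, hg T hT, hg' T hT, Pi.add_apply]⟩
  | smul a x _ hx =>
    obtain ⟨g, hg⟩ := hx
    exact ⟨a • g, fun T hT => by
      rw [map_smul, Pi.smul_apply, ← hg T hT, smul_eq_mul, mul_smul]⟩

section Exact

variable (o : ι ↪ ℕ) {θ : ι → R} {a : M →ₗ[R] N} {b : N →ₗ[R] L}

/-- Injectivity of `H^i(θ; M) → H^i(θ; N)`, expressed on cochains. -/
theorem exists_eq_koszulD_of_map_eq (ha : Function.Injective a) (hb : Function.Surjective b)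
    (hab : Function.Exact a b) {i : ℕ} (hL : ∀ j, j + 1 = i → KoszulVanish o θ L j)
    {f : Finset ι → M} {g : Finset ι → N} (hfg : ∀ T, #T = i → a (f T) = koszulD o θ g T) :
    ∃ w : Finset ι → M, ∀ T, #T = i → f T = koszulD o θ w T := by
  rcases i with _ | i
  · refine ⟨0, fun T hT => ha ?_⟩
    rw [hfg T hT, card_eq_zero.1 hT, koszulD_apply, koszulD_apply, sum_empty, sum_empty, map_zero]
  · obtain ⟨u, hu⟩ := hL i rfl (fun T => b (g T)) fun T hT => by
      rw [koszulD_map, ← hfg T hT, hab.apply_apply_eq_zero]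
    choose u' hu' using fun T => hb (u T)
    choose! w hw using fun T (hT : #T = i) => (hab (g T - koszulD o θ u' T)).1 <| by
      rw [map_sub, hu T hT, ← koszulD_map, sub_eq_zero]
      simp only [hu']
    refine ⟨w, fun T hT => ha ?_⟩
    rw [hfg T hT, ← koszulD_map, koszulD_congr o θ hw hT]
    change _ = koszulD o θ (g - koszulD o θ u') T
    rw [map_sub, koszulD_koszulD, sub_zero]

theorem koszulVanish_left (ha : Function.Injective a) (hb : Function.Surjective b)
    (hab : Function.Exact a b) {i : ℕ} (hN : KoszulVanish o θ N i)
    (hL : ∀ j, j + 1 = i → KoszulVanish o θ L j) : KoszulVanish o θ M i := by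
  intro f hf
  obtain ⟨g, hg⟩ := hN (fun T => a (f T)) fun T hT => by rw [koszulD_map, hf T hT, map_zero]
  exact exists_eq_koszulD_of_map_eq o ha hb hab hL hg

theorem koszulVanish_middle (ha : Function.Injective a) (hb : Function.Surjective b)
    (hab : Function.Exact a b) {i : ℕ} (hM : KoszulVanish o θ M i)
    (hL : KoszulVanish o θ L i) : KoszulVanish o θ N i := by
  intro f hf
  obtain ⟨u, hu⟩ := hL (fun T => b (f T)) fun T hT => by rw [koszulD_map, hf T hT, map_zero]
  choose u' hu' using fun T => hb (u T)
  choose! w hw using fun T (hT : #T = i) => (hab (f T - koszulD o θ u' T)).1 <| by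
    rw [map_sub, hu T hT, ← koszulD_map, sub_eq_zero]
    simp only [hu']
  obtain ⟨g, hg⟩ := hM w fun T hT => ha <| by
    rw [← koszulD_map, koszulD_congr o θ hw hT]
    change koszulD o θ (f - koszulD o θ u') T = _
    rw [map_sub, koszulD_koszulD, sub_zero, hf T hT, map_zero]
  refine ⟨u' + fun T => a (g T), fun T hT => ?_⟩
  rw [map_add, Pi.add_apply, koszulD_map, ← hg T hT, hw T hT, add_sub_cancel]

theorem koszulVanish_right (ha : Function.Injective a) (hb : Function.Surjective b)
    (hab : Function.Exact a b) {i : ℕ} (hN : KoszulVanish o θ N i)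
    (hM : KoszulVanish o θ M (i + 1)) : KoszulVanish o θ L i := by
  intro f hf
  choose f' hf' using fun T => hb (f T)
  choose! w hw using fun T (hT : #T = i + 1) => (hab (koszulD o θ f' T)).1 <| by
    rw [← koszulD_map]
    simp only [hf', hf T hT]
  obtain ⟨g, hg⟩ := hM w fun T hT => ha <| by
    rw [← koszulD_map, koszulD_congr o θ hw hT, koszulD_koszulD, Pi.zero_apply, map_zero]
  obtain ⟨u, hu⟩ := hN (f' - fun T => a (g T)) fun T hT => by
    rw [map_sub, Pi.sub_apply, koszulD_map, ← hg T hT, hw T hT, sub_self]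
  refine ⟨fun T => b (u T), fun T hT => ?_⟩
  rw [koszulD_map, ← hu T hT, Pi.sub_apply, map_sub, hf', hab.apply_apply_eq_zero, sub_zero]

end Exact

/-! ### Depth sensitivity -/

section DepthSensitivity

variable (o : ι ↪ ℕ) {θ : ι → R}

theorem koszulVanish_quotSMulTop {r : R} (hr : IsSMulRegular M r) {i : ℕ}
    (h : KoszulVanish o θ M i) (h' : KoszulVanish o θ M (i + 1)) :
    KoszulVanish o θ (QuotSMulTop r M) i :=
  koszulVanish_right o (a := LinearMap.lsmul R M r) hr (Submodule.mkQ_surjective _)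
    (LinearMap.exact_lsmul_mkQ_smul_top M r) h h'

theorem koszulVanish_of_quotSMulTop {r : R} (hr : r ∈ (Ideal.span (Set.range θ)).radical)
    (hreg : IsSMulRegular M r) {i : ℕ}
    (h : ∀ j, j + 1 = i → KoszulVanish o θ (QuotSMulTop r M) j) : KoszulVanish o θ M i := by
  obtain ⟨n, hn⟩ := hr
  intro f hf
  obtain ⟨g, hg⟩ := exists_smul_eq_koszulD o hf hn
  clear hn
  -- `r` acts injectively on cohomology in degree `i`, whereas `r ^ n` kills the class of `f`.
  induction n generalizing g with
  | zero => exact ⟨g, fun T hT => by rw [← hg T hT, pow_zero, one_smul]⟩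
  | succ n ih =>
    obtain ⟨w, hw⟩ := exists_eq_koszulD_of_map_eq o (a := LinearMap.lsmul R M r) hreg
      (Submodule.mkQ_surjective _) (LinearMap.exact_lsmul_mkQ_smul_top M r) h
      (f := fun T => r ^ n • f T) (g := g) fun T hT => by
        rw [← hg T hT, LinearMap.lsmul_apply, smul_smul, pow_succ']
    exact ih w hw

theorem koszulVanish_of_isWeaklyRegular (rs : List R)
    (hrs : ∀ r ∈ rs, r ∈ (Ideal.span (Set.range θ)).radical)
    (hreg : RingTheory.Sequence.IsWeaklyRegular M rs) :
    ∀ i < rs.length, KoszulVanish o θ M i := by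
  induction rs generalizing M with
  | nil => exact fun i hi => absurd hi i.not_lt_zero
  | cons r rs ih =>
    intro i hi
    rw [List.forall_mem_cons] at hrs
    rw [RingTheory.Sequence.isWeaklyRegular_cons_iff] at hreg
    refine koszulVanish_of_quotSMulTop o hrs.1 hreg.1 ?_
    rintro j rfl
    exact ih hrs.2 hreg.2 j (Nat.succ_lt_succ_iff.1 hi)

theorem eq_zero_of_koszulVanish_zero (h : KoszulVanish o θ M 0) {x : M}
    (hx : ∀ j, θ j • x = 0) : x = 0 := by
  obtain ⟨g, hg⟩ := h (fun _ => x) fun T _ => by simp only [koszulD_apply, hx, smul_zero,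
    sum_const_zero]
  simpa only [koszulD_apply, sum_empty] using hg ∅ rfl

theorem exists_isSMulRegular_of_koszulVanish_zero [IsNoetherianRing R] [Module.Finite R M]
    (h : KoszulVanish o θ M 0) : ∃ r ∈ Ideal.span (Set.range θ), IsSMulRegular M r := by
  by_contra! hcon
  -- By prime avoidance the ideal lies in the annihilator of a nonzero element.
  cases subsingleton_or_nontrivial M
  · exact hcon 0 (zero_mem _) .zero
  obtain ⟨p, hp, hle⟩ := (Ideal.subset_union_prime_finite (associatedPrimes.finite R M)
    (f := id) (I := Ideal.span (Set.range θ)) ⊤ ⊤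
    (fun _ hI _ _ => IsAssociatedPrime.isPrime hI)).mp <| by
      simp only [id, biUnion_associatedPrimes_eq_compl_regular R M]
      exact fun r hr => hcon r hr
  obtain ⟨hprime, x, rfl⟩ := isAssociatedPrime_iff.mp hp
  have hx : x = 0 := eq_zero_of_koszulVanish_zero o h fun j => by
    simpa only [id, Submodule.mem_colon_singleton, Submodule.mem_bot] using
      hle (Ideal.subset_span ⟨j, rfl⟩)
  exact hprime.ne_top (by simp [hx, Ideal.eq_top_iff_one])

theorem exists_isWeaklyRegular_of_koszulVanish [IsNoetherianRing R] [Module.Finite R M] (n : ℕ)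
    (h : ∀ i < n, KoszulVanish o θ M i) :
    ∃ rs : List R, rs.length = n ∧ (∀ r ∈ rs, r ∈ Ideal.span (Set.range θ)) ∧
      RingTheory.Sequence.IsWeaklyRegular M rs := by
  induction n generalizing M with
  | zero => exact ⟨[], rfl, List.forall_mem_nil _, .nil R M⟩
  | succ n ih =>
    obtain ⟨r, hr, hreg⟩ := exists_isSMulRegular_of_koszulVanish_zero o (h 0 n.succ_pos)
    obtain ⟨rs, hlen, hmem, hrs⟩ := ih (M := QuotSMulTop r M) fun i hi =>
      koszulVanish_quotSMulTop o hreg (h i (by omega)) (h (i + 1) (by omega))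
    exact ⟨r :: rs, by rw [List.length_cons, hlen], List.forall_mem_cons.2 ⟨hr, hmem⟩,
      (RingTheory.Sequence.isWeaklyRegular_cons_iff ..).2 ⟨hreg, hrs⟩⟩

end DepthSensitivity

end Koszul

/-! ### Signed simplicial cochains -/

namespace SComplex

variable {V k : Type} [DecidableEq V] [Field k]

/-- The simplicial coboundary of a cochain with values in `k`, with incidence signs `s`. Cochains
are functions on all finite sets of vertices; only their values on faces matter. -/
def signedD (s : Finset V → V → ℤ) (φ : Finset V → k) (σ : Finset V) : k :=
  ∑ v ∈ σ, s σ v • φ (σ.erase v)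

variable (k) in
/-- The reduced cohomology of `K` over `k`, computed with incidence signs `s`, vanishes in
topological degree `i - 1`; as in `HVanish`, the index `i` is a cardinality of faces. -/
def CochainVanish (s : Finset V → V → ℤ) (K : SComplex V) (i : ℕ) : Prop :=
  ∀ φ : Finset V → k, (∀ σ ∈ K.faces, #σ = i + 1 → signedD s φ σ = 0) →
    ∃ ψ : Finset V → k, ∀ σ ∈ K.faces, #σ = i → φ σ = signedD s ψ σ

/-! ### Independence of the incidence signs -/

section Signs

variable {K : SComplex V} {i : ℕ} {s s' : Finset V → V → ℤ} {ε : Finset V → ℤ}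

theorem signedD_smul {σ : Finset V} (h : ∀ v ∈ σ, s σ v * ε (σ.erase v) = ε σ * s' σ v)
    (φ : Finset V → k) : signedD s (fun τ => ε τ • φ τ) σ = ε σ • signedD s' φ σ := by
  simp only [signedD, smul_sum, smul_smul]
  exact sum_congr rfl fun v hv => by rw [h v hv]

theorem CochainVanish.of_sign (hε : ∀ σ, ε σ * ε σ = 1)
    (h : ∀ σ ∈ K.faces, ∀ v ∈ σ, s σ v * ε (σ.erase v) = ε σ * s' σ v)
    (hs : CochainVanish k s K i) : CochainVanish k s' K i := by
  intro φ hφ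
  obtain ⟨ψ, hψ⟩ := hs (fun σ => ε σ • φ σ) fun σ hσ hi => by
    rw [signedD_smul (h σ hσ), hφ σ hσ hi, smul_zero]
  have hεψ : ψ = fun σ => ε σ • ε σ • ψ σ := by
    simp only [smul_smul, hε, one_smul]
  refine ⟨fun σ => ε σ • ψ σ, fun σ hσ hi => ?_⟩
  have hσψ := hψ σ hσ hi
  rw [hεψ, signedD_smul (h σ hσ)] at hσψ
  simpa only [smul_smul, hε, one_smul] using congrArg (ε σ • ·) hσψ

theorem cochainVanish_iff_of_sign (hε : ∀ σ, ε σ * ε σ = 1)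
    (h : ∀ σ ∈ K.faces, ∀ v ∈ σ, s σ v * ε (σ.erase v) = ε σ * s' σ v) :
    CochainVanish k s K i ↔ CochainVanish k s' K i := by
  refine ⟨.of_sign hε h, .of_sign hε fun σ hσ v hv => ?_⟩
  linear_combination (-(ε σ * ε (σ.erase v))) * h σ hσ v hv + s σ v * ε σ * hε (σ.erase v)
    - s' σ v * ε (σ.erase v) * hε σ

theorem prod_prod_eq_mul_erase {t : V → V → ℤ} (ht : ∀ x, t x x = 1) {σ : Finset V} {v : V}
    (hv : v ∈ σ) :
    ∏ x ∈ σ, ∏ y ∈ σ, t x y =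
      (∏ y ∈ σ.erase v, t v y * t y v) * ∏ x ∈ σ.erase v, ∏ y ∈ σ.erase v, t x y := by
  simp only [← mul_prod_erase σ _ hv, prod_mul_distrib, ht, one_mul]
  ring

theorem koszulSign_eq_prod_erase (o : V → ℕ) (σ : Finset V) (v : V) :
    koszulSign o σ v = ∏ w ∈ σ.erase v, if o w < o v then -1 else 1 := by
  rw [koszulSign_eq_prod, prod_erase]
  exact if_neg (lt_irrefl _)

theorem cochainVanish_koszulSign_iff {o o' : V → ℕ} (ho : ∀ σ ∈ K.faces, Set.InjOn o σ)
    (ho' : ∀ σ ∈ K.faces, Set.InjOn o' σ) :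
    CochainVanish k (koszulSign o) K i ↔ CochainVanish k (koszulSign o') K i := by
  -- The two orientations of a face differ by the sign of the inversions between `o` and `o'`.
  let t : V → V → ℤ := fun x y => if o x < o y ∧ o' y < o' x then -1 else 1
  have ht : ∀ x y, t x y * t x y = 1 := fun x y => by simp only [t]; split_ifs <;> rfl
  refine cochainVanish_iff_of_sign (ε := fun σ => ∏ x ∈ σ, ∏ y ∈ σ, t x y)
    (fun σ => by simp only [← prod_mul_distrib, ht, prod_const_one]) fun σ hσ v hv => ?_
  have hfactor : koszulSign o σ v = (∏ y ∈ σ.erase v, t v y * t y v) * koszulSign o' σ v := by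
    rw [koszulSign_eq_prod_erase, koszulSign_eq_prod_erase, ← prod_mul_distrib]
    refine prod_congr rfl fun y hy => ?_
    obtain ⟨hyv, hyσ⟩ := mem_erase.1 hy
    rcases lt_or_gt_of_ne ((ho σ hσ).ne hyσ hv hyv) with a | a <;>
      rcases lt_or_gt_of_ne ((ho' σ hσ).ne hyσ hv hyv) with b | b <;>
      simp [t, a, b, a.not_gt, b.not_gt]
  rw [prod_prod_eq_mul_erase (fun x => by simp [t]) hv, hfactor]
  ring

/-- The incidence signs of a complex coloured by `c`, for the order of the colours: the sign of
the colour of the vertex relative to the colours of the face together with the colours in `S`. -/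
def colorSign {ι : Type} [DecidableEq ι] (o : ι → ℕ) (c : V → ι) (S : Finset ι)
    (σ : Finset V) (v : V) : ℤ :=
  koszulSign o (S ∪ σ.image c) (c v)

theorem cochainVanish_colorSign_iff {ι : Type} [DecidableEq ι] {o : ι → ℕ} {c : V → ι}
    (hc : ∀ σ ∈ K.faces, Set.InjOn c σ) {S : Finset ι} (hS : ∀ σ ∈ K.faces, ∀ v ∈ σ, c v ∉ S) :
    CochainVanish k (colorSign o c S) K i ↔ CochainVanish k (koszulSign (o ∘ c)) K i := by
  refine cochainVanish_iff_of_sign (ε := fun σ => ∏ v ∈ σ, koszulSign o S (c v)) (fun σ => ?_)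
    fun σ hσ v hv => ?_
  · rw [← prod_mul_distrib]
    exact prod_eq_one fun v _ => koszulSign_mul_self _ _ _
  · have hdisj : Disjoint S (σ.image c) := by
      simp only [Finset.disjoint_right, forall_mem_image]
      exact hS σ hσ
    have hsign : colorSign o c S σ v = koszulSign o S (c v) * koszulSign (o ∘ c) σ v := by
      rw [colorSign, koszulSign_eq_prod, prod_union hdisj, prod_image (hc σ hσ),
        ← koszulSign_eq_prod, koszulSign_eq_prod (o ∘ c)]
      rfl
    rw [hsign, ← mul_prod_erase σ _ hv]
    ring

end Signs

/-! ### Homology and cohomology -/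

variable (k) in
/-- The functional on the simplicial chains of `K` on faces of cardinality `n` given by the
cochain `φ`. -/
noncomputable def chainEval (K : SComplex V) (n : ℕ) (φ : Finset V → k) :
    Module.Dual k (ChainsOf k K n) :=
  Finsupp.linearCombination k fun s : Faces K n => φ s.1

theorem chainEval_single (K : SComplex V) (n : ℕ) (φ : Finset V → k) (s : Faces K n) :
    chainEval k K n φ (Finsupp.single s 1) = φ s.1 := by
  rw [chainEval, Finsupp.linearCombination_single, one_smul]

theorem dual_eq_chainEval_iff {K : SComplex V} {n : ℕ} {η : Module.Dual k (ChainsOf k K n)}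
    {φ : Finset V → k} :
    η = chainEval k K n φ ↔ ∀ s : Faces K n, η (Finsupp.single s 1) = φ s.1 := by
  refine ⟨fun h s => by rw [h, chainEval_single], fun h => ?_⟩
  refine Finsupp.lhom_ext' fun s => LinearMap.ext_ring ?_
  rw [LinearMap.comp_apply, LinearMap.comp_apply, Finsupp.lsingle_apply, h s, chainEval_single]

theorem chainEval_surjective (K : SComplex V) (n : ℕ) :
    Function.Surjective (chainEval k K n) := by
  refine fun η => ⟨fun σ => if h : σ ∈ K.faces ∧ #σ = n then
    η (Finsupp.single (⟨σ, h⟩ : Faces K n) 1) else 0, (dual_eq_chainEval_iff.2 fun s => ?_).symm⟩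
  rw [dif_pos s.2]
  rfl

theorem chainEval_eq_iff {K : SComplex V} {n : ℕ} {φ ψ : Finset V → k} :
    chainEval k K n φ = chainEval k K n ψ ↔ ∀ σ ∈ K.faces, #σ = n → φ σ = ψ σ := by
  simp only [dual_eq_chainEval_iff, chainEval_single]
  exact ⟨fun h σ hσ hn => h ⟨σ, hσ, hn⟩, fun h s => h s.1 s.2.1 s.2.2⟩

section Homology

variable [Fintype V]

variable (V) in
/-- The enumeration of the vertices that underlies `arbOrder`. -/
noncomputable def arbIndex : V ↪ ℕ :=
  (Fintype.equivFin V).toEmbedding.trans Fin.valEmbedding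

theorem dualMap_bd_chainEval (K : SComplex V) (n : ℕ) (φ : Finset V → k) :
    (bd k K n).dualMap (chainEval k K (n - 1) φ) =
      chainEval k K n (signedD (koszulSign (arbIndex V)) φ) := by
  rw [dual_eq_chainEval_iff]
  intro s
  rw [LinearMap.dualMap_apply, bd, Finsupp.lsum_single, LinearMap.toSpanSingleton_apply, one_smul,
    signedD, ← sum_attach]
  refine (map_sum (chainEval k K (n - 1) φ) _ _).trans (sum_congr rfl fun x _ => ?_)
  refine (LinearMap.map_smul (chainEval k K (n - 1) φ) _ _).trans ?_
  refine (congrArg _ (chainEval_single K (n - 1) φ _)).trans ?_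
  rw [koszulSign, zsmul_eq_mul, smul_eq_mul]
  push_cast
  congr!

theorem hVanish_iff_cochainVanish (K : SComplex V) (i : ℕ) :
    HVanish k K i ↔ CochainVanish k (koszulSign (arbIndex V)) K i := by
  have hdual : HVanish k K i ↔
      LinearMap.ker (bd k K (i + 1)).dualMap ≤ LinearMap.range (bd k K i).dualMap := by
    rw [LinearMap.ker_dualMap_eq_dualAnnihilator_range,
      LinearMap.range_dualMap_eq_dualAnnihilator_ker]
    exact Subspace.dualAnnihilator_le_dualAnnihilator_iff.symm
  have hker (φ : Finset V → k) : chainEval k K i φ ∈ LinearMap.ker (bd k K (i + 1)).dualMap ↔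
      ∀ σ ∈ K.faces, #σ = i + 1 → signedD (koszulSign (arbIndex V)) φ σ = 0 := by
    refine LinearMap.mem_ker.trans ?_
    refine (Eq.congr_left (dualMap_bd_chainEval K (i + 1) φ)).trans ?_
    rw [eq_comm, dual_eq_chainEval_iff]
    exact ⟨fun h σ hσ hi => (h ⟨σ, hσ, hi⟩).symm, fun h s => (h s.1 s.2.1 s.2.2).symm⟩
  have hrange (φ : Finset V → k) : chainEval k K i φ ∈ LinearMap.range (bd k K i).dualMap ↔
      ∃ ψ, ∀ σ ∈ K.faces, #σ = i → φ σ = signedD (koszulSign (arbIndex V)) ψ σ := by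
    simp only [LinearMap.mem_range, (chainEval_surjective K (i - 1)).exists, dualMap_bd_chainEval,
      chainEval_eq_iff, eq_comm]
  rw [hdual]
  refine (chainEval_surjective K i).forall.trans (forall_congr' fun φ => ?_)
  rw [hker, hrange]

theorem cochainVanish_koszulSign_iff_hVanish {K : SComplex V} {i : ℕ} {o : V → ℕ}
    (ho : ∀ σ ∈ K.faces, Set.InjOn o σ) : CochainVanish k (koszulSign o) K i ↔ HVanish k K i := by
  rw [hVanish_iff_cochainVanish]
  exact cochainVanish_koszulSign_iff ho fun _ _ => (arbIndex V).injective.injOn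

end Homology

end SComplex

/-! ### Coefficients in Stanley–Reisner rings -/

section FaceExp

variable {V : Type*}

/-- The exponent vector of the squarefree monomial supported on `s`. -/
noncomputable def faceExp (s : Finset V) : V →₀ ℕ := ∑ v ∈ s, Finsupp.single v 1

theorem faceExp_apply [DecidableEq V] (s : Finset V) (v : V) :
    faceExp s v = if v ∈ s then 1 else 0 := by
  simp [faceExp, Finsupp.finsetSum_apply, Finsupp.single_apply]

theorem faceExp_sub_single [DecidableEq V] (s : Finset V) (v : V) :
    faceExp s - Finsupp.single v 1 = faceExp (s.erase v) := by
  ext w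
  rw [Finsupp.tsub_apply, faceExp_apply, faceExp_apply, Finsupp.single_apply]
  by_cases h : v = w <;> by_cases h' : w ∈ s <;> simp [h, h', mem_erase, Ne.symm]

theorem support_faceExp (s : Finset V) : (faceExp s).support = s := by
  classical
  ext v
  simp [faceExp_apply]

theorem faceExp_le_iff {s : Finset V} {m : V →₀ ℕ} : faceExp s ≤ m ↔ s ⊆ m.support := by
  classical
  refine forall_congr' fun v => ?_
  rw [faceExp_apply, Finsupp.mem_support_iff, ← Nat.one_le_iff_ne_zero]
  split_ifs with hv <;> simp [hv]

theorem faceExp_support_eq_iff {m : V →₀ ℕ} :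
    faceExp m.support = m ↔ ∀ v ∈ m.support, m v < 2 := by
  classical
  simp only [Finsupp.ext_iff, faceExp_apply, Finsupp.mem_support_iff]
  refine forall_congr' fun v => ?_
  split_ifs <;> lia

theorem single_one_le_of_mem_support {m : V →₀ ℕ} {v : V} (hv : v ∈ m.support) :
    Finsupp.single v 1 ≤ m := by
  rw [Finsupp.single_le_iff, Nat.one_le_iff_ne_zero]
  exact Finsupp.mem_support_iff.1 hv

theorem support_add_single {m : V →₀ ℕ} {v : V} (hv : v ∈ m.support) :
    (m + Finsupp.single v 1).support = m.support := by
  ext w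
  by_cases h : v = w <;> simp_all

theorem support_sub_single_subset (m : V →₀ ℕ) (v : V) :
    (m - Finsupp.single v 1).support ⊆ m.support :=
  Finsupp.support_mono tsub_le_self

theorem mem_support_sub_single_self {m : V →₀ ℕ} {v : V} :
    v ∈ (m - Finsupp.single v 1).support ↔ 2 ≤ m v := by
  rw [Finsupp.mem_support_iff, Finsupp.tsub_apply, Finsupp.single_eq_same]
  lia

theorem mem_support_sub_single_of_ne {m : V →₀ ℕ} {v w : V} (h : w ≠ v) :
    w ∈ (m - Finsupp.single v 1).support ↔ w ∈ m.support := by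
  simp [Finsupp.single_eq_of_ne h]

end FaceExp

namespace SComplex

variable {V : Type} [DecidableEq V] {k : Type} [Field k] {K : SComplex V}

section Coefficients

omit [DecidableEq V] in
theorem prod_X_eq_monomial (s : Finset V) :
    ∏ v ∈ s, (MvPolynomial.X v : MvPolynomial V k) = MvPolynomial.monomial (faceExp s) 1 := by
  rw [faceExp, MvPolynomial.monomial_sum_one]
  rfl

theorem mem_srIdeal_iff_coeff {p : MvPolynomial V k} :
    p ∈ srIdeal k K ↔ ∀ m : V →₀ ℕ, m.support ∈ K.faces → p.coeff m = 0 := by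
  have hspan : srIdeal k K = Ideal.span ((fun m => MvPolynomial.monomial m (1 : k)) ''
      (faceExp '' {s : Finset V | s ∉ K.faces})) := by
    rw [srIdeal, Set.image_image]
    simp only [prod_X_eq_monomial]
  rw [hspan, MvPolynomial.mem_ideal_span_monomial_image]
  refine forall_congr' fun m => ?_
  rw [MvPolynomial.mem_support_iff, not_imp_comm.symm, Set.exists_mem_image]
  refine imp_congr_left (not_iff_comm.1 ⟨fun hm => ⟨_, hm, faceExp_le_iff.2 subset_rfl⟩, ?_⟩)
  rintro ⟨s, hs, hle⟩ hm
  exact hs (K.down_closed hm (faceExp_le_iff.1 hle))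

open scoped Classical in
/-- The coefficient of a monomial in an element of the Stanley–Reisner ring. It is well defined
when the monomial is supported on a face, and set to zero otherwise. -/
noncomputable def srCoeff (m : V →₀ ℕ) : SRRing k K →+ k :=
  QuotientAddGroup.lift (srIdeal k K).toAddSubgroup
    (if m.support ∈ K.faces then MvPolynomial.coeffAddMonoidHom m else 0) fun p hp => by
      split_ifs with hm
      · exact mem_srIdeal_iff_coeff.1 hp m hm
      · rfl

theorem srCoeff_mk {m : V →₀ ℕ} (hm : m.support ∈ K.faces) (p : MvPolynomial V k) :
    srCoeff m (Ideal.Quotient.mk (srIdeal k K) p) = p.coeff m := by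
  refine (QuotientAddGroup.lift_mk' _ _ p).trans ?_
  rw [if_pos hm]
  rfl

theorem srRing_ext {x y : SRRing k K}
    (h : ∀ m : V →₀ ℕ, m.support ∈ K.faces → srCoeff m x = srCoeff m y) : x = y := by
  obtain ⟨p, rfl⟩ := Ideal.Quotient.mk_surjective x
  obtain ⟨q, rfl⟩ := Ideal.Quotient.mk_surjective y
  rw [Ideal.Quotient.mk_eq_mk_iff_sub_mem, mem_srIdeal_iff_coeff]
  intro m hm
  rw [MvPolynomial.coeff_sub, ← srCoeff_mk hm, ← srCoeff_mk hm, h m hm, sub_self]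

theorem support_sub_single_mem {m : V →₀ ℕ} (hm : m.support ∈ K.faces) (v : V) :
    (m - Finsupp.single v 1).support ∈ K.faces :=
  K.down_closed hm (support_sub_single_subset m v)

end Coefficients

/-! ### The coloured linear forms -/

section ColorVar

variable [Fintype V] {ι : Type} [DecidableEq ι] {c : V → ι}

/-- The coloured linear forms: `colorVar c j` is the sum of all variables of colour `j`. -/
noncomputable def colorVar (k : Type) [Field k] (c : V → ι) (j : ι) : MvPolynomial V k :=
  ∑ v with c v = j, MvPolynomial.X v

theorem srCoeff_colorVar_smul {m : V →₀ ℕ} (hm : m.support ∈ K.faces) (j : ι) (x : SRRing k K) :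
    srCoeff m (colorVar k c j • x) =
      ∑ v ∈ m.support with c v = j, srCoeff (m - Finsupp.single v 1) x := by
  obtain ⟨p, rfl⟩ := Ideal.Quotient.mk_surjective x
  have hsmul : colorVar k c j • Ideal.Quotient.mk (srIdeal k K) p =
      Ideal.Quotient.mk (srIdeal k K) (colorVar k c j * p) := rfl
  rw [hsmul, srCoeff_mk hm]
  simp only [srCoeff_mk (support_sub_single_mem hm _), colorVar, sum_mul, MvPolynomial.coeff_sum,
    MvPolynomial.coeff_X_mul', ← sum_filter, filter_filter]
  exact sum_congr (by ext; simp [and_comm]) fun _ _ => rfl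

theorem srCoeff_koszulD (o : ι ↪ ℕ) (f : Finset ι → SRRing k K) (T : Finset ι) {m : V →₀ ℕ}
    (hm : m.support ∈ K.faces) :
    srCoeff m (koszulD o (colorVar k c) f T) = ∑ v ∈ m.support with c v ∈ T,
      koszulSign o T (c v) • srCoeff (m - Finsupp.single v 1) (f (T.erase (c v))) := by
  rw [koszulD_apply, map_sum,
    ← sum_fiberwise_of_maps_to (t := T) (g := c) (fun v hv => (mem_filter.1 hv).2)]
  refine sum_congr rfl fun j hj => ?_
  rw [map_zsmul, srCoeff_colorVar_smul hm, smul_sum, filter_filter]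
  refine sum_congr (filter_congr fun v _ => ?_) fun v hv => by rw [(mem_filter.1 hv).2.2]
  exact ⟨fun h => ⟨h ▸ hj, h⟩, And.right⟩

/-- On polynomials: divide the monomials divisible by the square of a variable of colour `j` by
that variable, and kill the others. -/
noncomputable def colorShiftPoly (k : Type) [Field k] (c : V → ι) (j : ι) :
    MvPolynomial V k →+ MvPolynomial V k :=
  AddMonoidHom.mk' (fun p => ∑ v with c v = j,
      MvPolynomial.X v * MvPolynomial.divMonomial p (Finsupp.single v 2)) fun p q => by
    simp only [MvPolynomial.add_divMonomial, mul_add, sum_add_distrib]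

omit [DecidableEq V] in
theorem coeff_colorShiftPoly (j : ι) (p : MvPolynomial V k) (m : V →₀ ℕ) :
    (colorShiftPoly k c j p).coeff m =
      ∑ v ∈ m.support with c v = j, p.coeff (m + Finsupp.single v 1) := by
  classical
  simp only [colorShiftPoly, AddMonoidHom.mk'_apply, MvPolynomial.coeff_sum,
    MvPolynomial.coeff_X_mul', ← sum_filter, filter_filter, MvPolynomial.coeff_divMonomial]
  refine sum_congr (by ext; simp [and_comm]) fun v hv => congrArg (p.coeff ·) ?_
  rw [show (2 : ℕ) = 1 + 1 from rfl, Finsupp.single_add, add_assoc,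
    add_tsub_cancel_of_le (single_one_le_of_mem_support (mem_filter.1 hv).1), add_comm]

/-- The partial inverse of multiplication by `colorVar k c j` on the Stanley–Reisner ring induced
by `colorShiftPoly`; it contracts the multidegrees that are not squarefree in colour `j`. -/
noncomputable def colorShift (c : V → ι) (j : ι) : SRRing k K →+ SRRing k K :=
  QuotientAddGroup.map (srIdeal k K).toAddSubgroup (srIdeal k K).toAddSubgroup
    (colorShiftPoly k c j) fun p hp => mem_srIdeal_iff_coeff.2 fun m hm => by
      rw [coeff_colorShiftPoly]
      refine sum_eq_zero fun v hv => mem_srIdeal_iff_coeff.1 hp _ ?_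
      rwa [support_add_single (mem_filter.1 hv).1]

theorem srCoeff_colorShift {m : V →₀ ℕ} (hm : m.support ∈ K.faces) (j : ι) (x : SRRing k K) :
    srCoeff m (colorShift c j x) =
      ∑ v ∈ m.support with c v = j, srCoeff (m + Finsupp.single v 1) x := by
  obtain ⟨p, rfl⟩ := Ideal.Quotient.mk_surjective x
  have hmk : colorShift c j (Ideal.Quotient.mk (srIdeal k K) p) =
      Ideal.Quotient.mk (srIdeal k K) (colorShiftPoly k c j p) := rfl
  rw [hmk, srCoeff_mk hm, coeff_colorShiftPoly]
  refine sum_congr rfl fun v hv => (srCoeff_mk ?_ p).symm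
  rwa [support_add_single (mem_filter.1 hv).1]

theorem colorShift_colorVar_smul {j l : ι} (hjl : l ≠ j) (x : SRRing k K) :
    colorShift c j (colorVar k c l • x) = colorVar k c l • colorShift c j x := by
  refine srRing_ext fun m hm => ?_
  have hleft : ∀ v ∈ m.support.filter (c · = j),
      srCoeff (m + Finsupp.single v 1) (colorVar k c l • x) = ∑ w ∈ m.support with c w = l,
        srCoeff (m + Finsupp.single v 1 - Finsupp.single w 1) x := fun v hv => by
    have hsupp := support_add_single (mem_filter.1 hv).1
    rw [srCoeff_colorVar_smul (hsupp ▸ hm), hsupp]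
  have hright : ∀ w ∈ m.support.filter (c · = l),
      srCoeff (m - Finsupp.single w 1) (colorShift c j x) = ∑ v ∈ m.support with c v = j,
        srCoeff (m - Finsupp.single w 1 + Finsupp.single v 1) x := fun w hw => by
    rw [srCoeff_colorShift (support_sub_single_mem hm w)]
    refine sum_congr (Finset.ext fun v => ?_) fun _ _ => rfl
    simp only [mem_filter, and_congr_left_iff]
    rintro rfl
    refine mem_support_sub_single_of_ne ?_
    rintro rfl
    exact hjl (mem_filter.1 hw).2.symm
  rw [srCoeff_colorShift hm, srCoeff_colorVar_smul hm, sum_congr rfl hleft, sum_congr rfl hright,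
    sum_comm]
  refine sum_congr rfl fun w hw => sum_congr rfl fun v _ => ?_
  rw [tsub_add_eq_add_tsub (single_one_le_of_mem_support (mem_filter.1 hw).1)]

omit [DecidableEq V] [Fintype V] in
theorem filter_color_eq_singleton {σ : Finset V} (hc : Set.InjOn c σ) {v : V} (hv : v ∈ σ) :
    {w ∈ σ | c w = c v} = {v} := by
  ext w
  simp only [mem_filter, mem_singleton]
  exact ⟨fun h => hc h.1 hv h.2, by rintro rfl; exact ⟨hv, rfl⟩⟩

theorem srCoeff_colorVar_smul_colorShift (hc : ∀ σ ∈ K.faces, Set.InjOn c σ) {m : V →₀ ℕ}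
    (hm : m.support ∈ K.faces) (j : ι) (x : SRRing k K) :
    srCoeff m (colorVar k c j • colorShift c j x) =
      if ∃ v ∈ m.support, c v = j ∧ 2 ≤ m v then srCoeff m x else 0 := by
  rw [srCoeff_colorVar_smul hm]
  by_cases hj : ∃ v ∈ m.support, c v = j
  · obtain ⟨v, hv, rfl⟩ := hj
    have hiff : (∃ w ∈ m.support, c w = c v ∧ 2 ≤ m w) ↔ 2 ≤ m v := by
      refine ⟨fun ⟨w, hw, hwv, hmw⟩ => ?_, fun h => ⟨v, hv, rfl, h⟩⟩
      rwa [← hc _ hm hw hv hwv]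
    rw [filter_color_eq_singleton (hc _ hm) hv, sum_singleton,
      srCoeff_colorShift (support_sub_single_mem hm v)]
    simp only [hiff.trans mem_support_sub_single_self.symm]
    split_ifs with hmv
    · rw [filter_color_eq_singleton (hc _ (support_sub_single_mem hm v)) hmv, sum_singleton,
        tsub_add_cancel_of_le (single_one_le_of_mem_support hv)]
    · refine sum_eq_zero fun w hw => ?_
      obtain ⟨hw, hwv⟩ := mem_filter.1 hw
      exact (hmv (hc _ hm (support_sub_single_subset m v hw) hv hwv ▸ hw)).elim
  · push Not at hj
    rw [filter_eq_empty_iff.2 fun v hv => hj v hv, sum_empty, if_neg]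
    exact fun ⟨v, hv, hvj, _⟩ => hj v hv hvj

theorem srCoeff_colorShift_colorVar_smul (hc : ∀ σ ∈ K.faces, Set.InjOn c σ) {m : V →₀ ℕ}
    (hm : m.support ∈ K.faces) (j : ι) (x : SRRing k K) :
    srCoeff m (colorShift c j (colorVar k c j • x)) =
      if ∃ v ∈ m.support, c v = j then srCoeff m x else 0 := by
  rw [srCoeff_colorShift hm]
  split_ifs with hj
  · obtain ⟨v, hv, rfl⟩ := hj
    have hsupp := support_add_single hv
    rw [filter_color_eq_singleton (hc _ hm) hv, sum_singleton, srCoeff_colorVar_smul (hsupp ▸ hm),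
      hsupp, filter_color_eq_singleton (hc _ hm) hv, sum_singleton, add_tsub_cancel_right]
  · push Not at hj
    rw [filter_eq_empty_iff.2 fun v hv => hj v hv, sum_empty]

theorem srCoeff_koszulD_koszulContract (hc : ∀ σ ∈ K.faces, Set.InjOn c σ) (o : ι ↪ ℕ) (j : ι)
    {f : Finset ι → SRRing k K} {i : ℕ}
    (hf : ∀ T, #T = i + 1 → koszulD o (colorVar k c) f T = 0) {T : Finset ι} (hT : #T = i)
    {m : V →₀ ℕ} (hm : m.support ∈ K.faces) :
    srCoeff m (koszulD o (colorVar k c) (koszulContract o j (colorShift c j) f) T) =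
      if ∃ v ∈ m.support, c v = j ∧ (c v ∈ T → 2 ≤ m v) then srCoeff m (f T) else 0 := by
  rw [koszulD_koszulContract o (fun l hl x => colorShift_colorVar_smul hl x) hf hT]
  split_ifs with hj h h
  · rw [srCoeff_colorVar_smul_colorShift hc hm, if_pos]
    exact h.imp fun v ⟨hv, hvj, h2⟩ => ⟨hv, hvj, h2 (hvj ▸ hj)⟩
  · rw [srCoeff_colorVar_smul_colorShift hc hm, if_neg]
    exact fun ⟨v, hv, hvj, h2⟩ => h ⟨v, hv, hvj, fun _ => h2⟩
  · rw [srCoeff_colorShift_colorVar_smul hc hm, if_pos]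
    exact h.imp fun v ⟨hv, hvj, _⟩ => ⟨hv, hvj⟩
  · rw [srCoeff_colorShift_colorVar_smul hc hm, if_neg]
    exact fun ⟨v, hv, hvj⟩ => h ⟨v, hv, hvj, fun hvT => (hj (hvj ▸ hvT)).elim⟩

theorem exists_srCoeff_sub_koszulD_eq_zero (hc : ∀ σ ∈ K.faces, Set.InjOn c σ) (o : ι ↪ ℕ)
    {f : Finset ι → SRRing k K} {i : ℕ}
    (hf : ∀ T, #T = i + 1 → koszulD o (colorVar k c) f T = 0) (J : Finset ι) :
    ∃ g : Finset ι → SRRing k K, ∀ T, #T = i → ∀ m : V →₀ ℕ, m.support ∈ K.faces →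
      (∃ v ∈ m.support, c v ∈ J ∧ (c v ∈ T → 2 ≤ m v)) →
        srCoeff m ((f - koszulD o (colorVar k c) g) T) = 0 := by
  induction J using Finset.induction with
  | empty => exact ⟨0, fun T _ m _ ⟨v, _, hv, _⟩ => absurd hv (notMem_empty _)⟩
  | insert j J _ ih =>
    obtain ⟨g, hg⟩ := ih
    set f' := f - koszulD o (colorVar k c) g with hf'_def
    have hf' : ∀ T, #T = i + 1 → koszulD o (colorVar k c) f' T = 0 := fun T hT => by
      rw [hf'_def, map_sub, koszulD_koszulD, sub_zero, hf T hT]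
    refine ⟨g + koszulContract o j (colorShift c j) f', fun T hT m hm ⟨v, hv, hvJ, hvT⟩ => ?_⟩
    rw [map_add, ← sub_sub, ← hf'_def, Pi.sub_apply, map_sub,
      srCoeff_koszulD_koszulContract hc o j hf' hT hm]
    rcases mem_insert.1 hvJ with hvj | hvJ
    · rw [if_pos ⟨v, hv, hvj, hvT⟩, sub_self]
    · rw [hg T hT m hm ⟨v, hv, hvJ, hvT⟩, ite_self, sub_self]

end ColorVar

end SComplex

/-! ### Squarefree cochains -/

namespace SComplex

variable {V : Type} [DecidableEq V] {k : Type} [Field k] {K : SComplex V}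
  {ι : Type} [DecidableEq ι] {c : V → ι}

theorem mem_restrict {W σ : Finset V} : σ ∈ (K.restrict W).faces ↔ σ ∈ K.faces ∧ σ ⊆ W :=
  mem_filter

theorem image_erase_of_injOn {σ : Finset V} (hc : Set.InjOn c σ) {v : V}
    (hv : v ∈ σ) : (σ.erase v).image c = (σ.image c).erase (c v) := by
  rw [erase_eq, image_sdiff_of_injOn hc (singleton_subset_iff.2 hv), image_singleton,
    sdiff_singleton_eq_erase]

/-- The Koszul cochain with squarefree coefficients given by a family of simplicial cochains: its
value on `T` has coefficient `a S σ` at the monomial of the face `σ` if `T` is the disjoint union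
of `S` and the colours of `σ`. -/
noncomputable def squarefreeCochain (K : SComplex V) (c : V → ι) (a : Finset ι → Finset V → k)
    (T : Finset ι) : SRRing k K :=
  Ideal.Quotient.mk (srIdeal k K) (∑ σ ∈ K.faces with σ.image c ⊆ T,
    MvPolynomial.monomial (faceExp σ) (a (T \ σ.image c) σ))

theorem squarefreeCochain_congr {a b : Finset ι → Finset V → k} {T : Finset ι}
    (h : ∀ σ ∈ K.faces, σ.image c ⊆ T → a (T \ σ.image c) σ = b (T \ σ.image c) σ) :
    squarefreeCochain K c a T = squarefreeCochain K c b T :=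
  congrArg _ (sum_congr rfl fun σ hσ => by rw [h σ (mem_filter.1 hσ).1 (mem_filter.1 hσ).2])

theorem squarefreeCochain_eq_zero {a : Finset ι → Finset V → k} {T : Finset ι}
    (h : ∀ σ ∈ K.faces, σ.image c ⊆ T → a (T \ σ.image c) σ = 0) :
    squarefreeCochain K c a T = 0 := by
  rw [squarefreeCochain_congr (b := 0) h, squarefreeCochain]
  simp only [Pi.zero_apply, map_zero, sum_const_zero]

theorem srCoeff_squarefreeCochain (a : Finset ι → Finset V → k) (T : Finset ι) {m : V →₀ ℕ}
    (hm : m.support ∈ K.faces) :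
    srCoeff m (squarefreeCochain K c a T) =
      if ∀ v ∈ m.support, c v ∈ T ∧ m v < 2 then a (T \ m.support.image c) m.support else 0 := by
  have hiff : (∀ v ∈ m.support, c v ∈ T ∧ m v < 2) ↔
      m.support.image c ⊆ T ∧ faceExp m.support = m := by
    rw [image_subset_iff, faceExp_support_eq_iff]
    exact forall₂_and
  simp only [squarefreeCochain, srCoeff_mk hm, MvPolynomial.coeff_sum, MvPolynomial.coeff_monomial,
    hiff]
  split_ifs with h
  · rw [sum_eq_single_of_mem m.support (mem_filter.2 ⟨hm, h.1⟩), if_pos h.2]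
    intro σ _ hσ
    exact if_neg fun hσm => hσ (by rw [← hσm, support_faceExp])
  · refine sum_eq_zero fun σ hσ => if_neg ?_
    rintro rfl
    rw [support_faceExp] at h
    exact h ⟨(mem_filter.1 hσ).2, rfl⟩

omit [DecidableEq V] in
theorem forall_mem_support_sub_single_iff {m : V →₀ ℕ} (hc : Set.InjOn c m.support) {v : V}
    (hv : v ∈ m.support) {T : Finset ι} (hvT : c v ∈ T) :
    (∀ w ∈ (m - Finsupp.single v 1).support,
        c w ∈ T.erase (c v) ∧ (m - Finsupp.single v 1 : V →₀ ℕ) w < 2) ↔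
      ∀ w ∈ m.support, c w ∈ T ∧ m w < 2 := by
  refine ⟨fun h w hw => ?_, fun h w hw => ?_⟩
  · rcases eq_or_ne w v with rfl | hwv
    · refine ⟨hvT, not_le.1 fun h2 => ?_⟩
      exact notMem_erase _ _ (h w (mem_support_sub_single_self.2 h2)).1
    · obtain ⟨hwT, h2⟩ := h w ((mem_support_sub_single_of_ne hwv).2 hw)
      rw [Finsupp.tsub_apply, Finsupp.single_eq_of_ne hwv] at h2
      exact ⟨mem_of_mem_erase hwT, h2⟩
  · obtain ⟨hwT, h2⟩ := h w (support_sub_single_subset m v hw)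
    refine ⟨mem_erase.2 ⟨fun hwv => ?_, hwT⟩, (tsub_le_self : _ ≤ m w).trans_lt h2⟩
    obtain rfl := hc (support_sub_single_subset m v hw) hv hwv
    exact h2.not_ge (mem_support_sub_single_self.1 hw)

omit [DecidableEq V] in
theorem disjoint_image_color {S : Finset ι} {σ : Finset V} (hS : ∀ v ∈ σ, c v ∉ S) :
    Disjoint S (σ.image c) := by
  rwa [Finset.disjoint_right, forall_mem_image]

omit [DecidableEq V] in
theorem card_union_image_color {S : Finset ι} {σ : Finset V} (hσ : Set.InjOn c σ)
    (hS : ∀ v ∈ σ, c v ∉ S) : #(S ∪ σ.image c) = #σ + #S := by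
  rw [card_union_of_disjoint (disjoint_image_color hS), card_image_of_injOn hσ, add_comm]

theorem srCoeff_faceExp_squarefreeCochain (a : Finset ι → Finset V → k) {S : Finset ι}
    {σ : Finset V} (hσ : σ ∈ K.faces) (hS : ∀ v ∈ σ, c v ∉ S) :
    srCoeff (faceExp σ) (squarefreeCochain K c a (S ∪ σ.image c)) = a S σ := by
  rw [srCoeff_squarefreeCochain _ _ ((support_faceExp σ).symm ▸ hσ), if_pos, support_faceExp,
    union_sdiff_cancel_right (disjoint_image_color hS)]
  intro v hv
  rw [support_faceExp] at hv
  refine ⟨mem_union_right _ (mem_image_of_mem c hv), ?_⟩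
  rw [faceExp_apply, if_pos hv]
  exact one_lt_two

variable [Fintype V]

theorem koszulD_squarefreeCochain (hc : ∀ σ ∈ K.faces, Set.InjOn c σ) (o : ι ↪ ℕ)
    (a : Finset ι → Finset V → k) (T : Finset ι) :
    koszulD o (colorVar k c) (squarefreeCochain K c a) T =
      squarefreeCochain K c (fun S => signedD (colorSign o c S) (a S)) T := by
  refine srRing_ext fun m hm => ?_
  rw [srCoeff_koszulD o _ T hm, srCoeff_squarefreeCochain _ T hm]
  have hterm : ∀ v ∈ m.support.filter (c · ∈ T),
      srCoeff (m - Finsupp.single v 1) (squarefreeCochain K c a (T.erase (c v))) =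
        if ∀ v ∈ m.support, c v ∈ T ∧ m v < 2 then
          a (T \ m.support.image c) (m.support.erase v) else 0 := fun v hv => by
    obtain ⟨hv, hvT⟩ := mem_filter.1 hv
    rw [srCoeff_squarefreeCochain _ _ (support_sub_single_mem hm v)]
    simp only [forall_mem_support_sub_single_iff (hc _ hm) hv hvT]
    have herase : T.erase (c v) \ (m.support.image c).erase (c v) = T \ m.support.image c := by
      have hvm := mem_image_of_mem c hv
      ext
      grind
    refine if_ctx_congr Iff.rfl (fun h => ?_) fun _ => rfl
    rw [← faceExp_support_eq_iff.2 fun w hw => (h w hw).2, faceExp_sub_single, support_faceExp,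
      support_faceExp, image_erase_of_injOn (hc _ hm) hv, herase]
  rw [sum_congr rfl fun v hv => congrArg _ (hterm v hv)]
  split_ifs with h
  · have hTm : T \ m.support.image c ∪ m.support.image c = T :=
      sdiff_union_of_subset (image_subset_iff.2 fun v hv => (h v hv).1)
    rw [filter_true_of_mem fun v hv => (h v hv).1]
    simp only [signedD, colorSign, hTm]
  · exact sum_eq_zero fun _ _ => smul_zero _

theorem srCoeff_faceExp_koszulD (hc : ∀ σ ∈ K.faces, Set.InjOn c σ) (o : ι ↪ ℕ)
    (f : Finset ι → SRRing k K) {S : Finset ι} {σ : Finset V} (hσ : σ ∈ K.faces)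
    (hS : ∀ v ∈ σ, c v ∉ S) :
    srCoeff (faceExp σ) (koszulD o (colorVar k c) f (S ∪ σ.image c)) =
      signedD (colorSign o c S) (fun τ => srCoeff (faceExp τ) (f (S ∪ τ.image c))) σ := by
  rw [srCoeff_koszulD o f _ ((support_faceExp σ).symm ▸ hσ), support_faceExp,
    filter_true_of_mem fun v hv => mem_union_right _ (mem_image_of_mem c hv)]
  refine sum_congr rfl fun v hv => ?_
  rw [faceExp_sub_single, erase_union_distrib, erase_eq_of_notMem (hS v hv),
    ← image_erase_of_injOn (hc σ hσ) hv]
  rfl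

theorem exists_sub_koszulD_eq_squarefreeCochain (hc : ∀ σ ∈ K.faces, Set.InjOn c σ) (o : ι ↪ ℕ)
    {f : Finset ι → SRRing k K} {i : ℕ}
    (hf : ∀ T, #T = i + 1 → koszulD o (colorVar k c) f T = 0) :
    ∃ g : Finset ι → SRRing k K, ∃ a : Finset ι → Finset V → k,
      ∀ T, #T = i → (f - koszulD o (colorVar k c) g) T = squarefreeCochain K c a T := by
  obtain ⟨g, hg⟩ := exists_srCoeff_sub_koszulD_eq_zero hc o hf (univ.image c)
  refine ⟨g, fun S σ => srCoeff (faceExp σ) ((f - koszulD o (colorVar k c) g) (S ∪ σ.image c)),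
    fun T hT => srRing_ext fun m hm => ?_⟩
  rw [srCoeff_squarefreeCochain _ _ hm]
  split_ifs with h
  · rw [sdiff_union_of_subset (image_subset_iff.2 fun v hv => (h v hv).1),
      faceExp_support_eq_iff.2 fun v hv => (h v hv).2]
  · push Not at h
    obtain ⟨v, hv, hvT⟩ := h
    exact hg T hT m hm ⟨v, hv, mem_image_of_mem c (mem_univ v), hvT⟩

/-! ### Koszul cohomology of Stanley–Reisner rings -/

theorem mem_restrict_color {S : Finset ι} {σ : Finset V} :
    σ ∈ (K.restrict {v | c v ∉ S}).faces ↔ σ ∈ K.faces ∧ ∀ v ∈ σ, c v ∉ S := by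
  simp only [mem_restrict, subset_iff, mem_filter_univ]

theorem cochainVanish_of_koszulVanish (hc : ∀ σ ∈ K.faces, Set.InjOn c σ) (o : ι ↪ ℕ)
    {S : Finset ι} {i : ℕ} (h : KoszulVanish o (colorVar k c) (SRRing k K) (i + #S)) :
    CochainVanish k (colorSign o c S) (K.restrict {v | c v ∉ S}) i := by
  intro φ hφ
  let a : Finset ι → Finset V → k := fun S' => if S' = S then φ else 0
  have haS : a S = φ := if_pos rfl
  have ha : ∀ T, #T = i + #S + 1 → koszulD o (colorVar k c) (squarefreeCochain K c a) T = 0 := by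
    intro T hT
    rw [koszulD_squarefreeCochain hc]
    refine squarefreeCochain_eq_zero fun σ hσ hσT => ?_
    by_cases hS : T \ σ.image c = S
    · have hσS : ∀ v ∈ σ, c v ∉ S := fun v hv hvS =>
        (mem_sdiff.1 (hS ▸ hvS)).2 (mem_image_of_mem c hv)
      rw [hS, haS]
      refine hφ σ (mem_restrict_color.2 ⟨hσ, hσS⟩) ?_
      have hcard := card_union_image_color (hc σ hσ) hσS
      rw [← hS, sdiff_union_of_subset hσT, hS] at hcard
      lia
    · simp only [a, if_neg hS, signedD, Pi.zero_apply, smul_zero, sum_const_zero]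
  obtain ⟨g, hg⟩ := h _ ha
  refine ⟨fun τ => srCoeff (faceExp τ) (g (S ∪ τ.image c)), fun σ hσS hi => ?_⟩
  obtain ⟨hσ, hS⟩ := mem_restrict_color.1 hσS
  rw [← srCoeff_faceExp_koszulD hc o g hσ hS, ← hg, srCoeff_faceExp_squarefreeCochain a hσ hS, haS]
  rw [card_union_image_color (hc σ hσ) hS, hi]

theorem koszulVanish_of_cochainVanish (hc : ∀ σ ∈ K.faces, Set.InjOn c σ) (o : ι ↪ ℕ) {i : ℕ}
    (h : ∀ (S : Finset ι) (j : ℕ), j + #S = i →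
      CochainVanish k (colorSign o c S) (K.restrict {v | c v ∉ S}) j) :
    KoszulVanish o (colorVar k c) (SRRing k K) i := by
  intro f hf
  obtain ⟨g, a, hga⟩ := exists_sub_koszulD_eq_squarefreeCochain hc o hf
  have ha : ∀ S, ∀ σ ∈ (K.restrict {v | c v ∉ S}).faces, #σ + #S = i + 1 →
      signedD (colorSign o c S) (a S) σ = 0 := by
    intro S σ hσS hi
    obtain ⟨hσ, hS⟩ := mem_restrict_color.1 hσS
    have hT : #(S ∪ σ.image c) = i + 1 := by rw [card_union_image_color (hc σ hσ) hS, hi]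
    rw [← srCoeff_faceExp_squarefreeCochain (fun S => signedD (colorSign o c S) (a S)) hσ hS,
      ← koszulD_squarefreeCochain hc, ← koszulD_congr o _ hga hT, map_sub, koszulD_koszulD,
      sub_zero, hf _ hT, map_zero]
  have hex : ∀ S, ∃ ψ : Finset V → k, ∀ σ ∈ (K.restrict {v | c v ∉ S}).faces, #σ + #S = i →
      a S σ = signedD (colorSign o c S) ψ σ := by
    intro S
    rcases le_or_gt #S i with hSi | hSi
    · obtain ⟨ψ, hψ⟩ := h S (i - #S) (by lia) (a S) fun σ hσ hi => ha S σ hσ (by lia)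
      exact ⟨ψ, fun σ hσ hi => hψ σ hσ (by lia)⟩
    · exact ⟨0, fun σ _ hi => by lia⟩
  choose ψ hψ using hex
  refine ⟨g + squarefreeCochain K c ψ, fun T hT => ?_⟩
  rw [map_add, Pi.add_apply, koszulD_squarefreeCochain hc, ← sub_eq_iff_eq_add', ← Pi.sub_apply,
    hga T hT]
  refine squarefreeCochain_congr fun σ hσ hσT => ?_
  have hS : ∀ v ∈ σ, c v ∉ T \ σ.image c := fun v hv hvS =>
    (mem_sdiff.1 hvS).2 (mem_image_of_mem c hv)
  refine hψ _ σ (mem_restrict_color.2 ⟨hσ, hS⟩) ?_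
  rw [← card_union_image_color (hc σ hσ) hS, sdiff_union_of_subset hσT, hT]

theorem koszulVanish_iff_hVanish (hc : ∀ σ ∈ K.faces, Set.InjOn c σ) (o : ι ↪ ℕ) {i : ℕ} :
    KoszulVanish o (colorVar k c) (SRRing k K) i ↔ ∀ (S : Finset ι) (j : ℕ), j + #S = i →
      HVanish k (K.restrict {v | c v ∉ S}) j := by
  have hVanish_iff (S : Finset ι) (j : ℕ) :
      CochainVanish k (colorSign o c S) (K.restrict {v | c v ∉ S}) j ↔
        HVanish k (K.restrict {v | c v ∉ S}) j := by
    have hcS : ∀ σ ∈ (K.restrict {v | c v ∉ S}).faces, Set.InjOn c σ :=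
      fun σ hσ => hc σ (mem_restrict.1 hσ).1
    rw [cochainVanish_colorSign_iff hcS fun σ hσ => (mem_restrict_color.1 hσ).2]
    exact cochainVanish_koszulSign_iff_hVanish fun σ hσ => o.injective.comp_injOn (hcS σ hσ)
  simp only [← hVanish_iff]
  refine ⟨?_, koszulVanish_of_cochainVanish hc o⟩
  rintro h S j rfl
  exact cochainVanish_of_koszulVanish hc o h

end SComplex

/-! ### Depth of Stanley–Reisner rings -/

theorem sSup_forall_lt_notMem {A : Set ℕ} (hA : A.Nonempty) :
    sSup {n | ∀ i < n, i ∉ A} = sInf A := by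
  refine IsGreatest.csSup_eq ⟨fun i hi => Nat.notMem_of_lt_sInf hi, fun n hn => ?_⟩
  exact not_lt.1 fun h => hn _ h (Nat.sInf_mem hA)

theorem top_ne_ofList_smul_top {R : Type*} [CommRing R] {I : Ideal R} (hI : I ≠ ⊤)
    {rs : List R} (hrs : ∀ r ∈ rs, r ∈ I) : (⊤ : Submodule R R) ≠ Ideal.ofList rs • ⊤ := by
  rw [smul_eq_mul, Ideal.mul_top, ne_comm]
  exact ne_top_of_le_ne_top hI (Ideal.span_le.2 hrs)

namespace SComplex

variable {V : Type} [DecidableEq V] {k : Type} [Field k] {K : SComplex V}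
  {ι : Type} [DecidableEq ι] {c : V → ι}

theorem span_X_ne_top (hK : ∅ ∈ K.faces) :
    Ideal.span (Set.range fun v => Ideal.Quotient.mk (srIdeal k K) (MvPolynomial.X v)) ≠ ⊤ := by
  have hlift : ∀ p ∈ srIdeal k K, MvPolynomial.constantCoeff p = 0 := fun p hp =>
    mem_srIdeal_iff_coeff.1 hp 0 (by rwa [Finsupp.support_zero])
  refine ne_top_of_le_ne_top
    (RingHom.ker_ne_top (Ideal.Quotient.lift (srIdeal k K) MvPolynomial.constantCoeff hlift))
    (Ideal.span_le.2 ?_)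
  rintro _ ⟨v, rfl⟩
  exact MvPolynomial.constantCoeff_X (R := k) v

omit [DecidableEq ι] in
theorem X_mul_X_mem_srIdeal (hc : ∀ σ ∈ K.faces, Set.InjOn c σ) {v w : V} (hvw : v ≠ w)
    (h : c v = c w) : MvPolynomial.X v * MvPolynomial.X w ∈ srIdeal k K := by
  refine Ideal.subset_span ⟨{v, w}, fun hf => hvw ?_, prod_pair hvw⟩
  exact hc _ hf (mem_insert_self _ _) (mem_insert_of_mem (mem_singleton_self _)) h

variable [Fintype V]

theorem mk_X_sq (hc : ∀ σ ∈ K.faces, Set.InjOn c σ) (v : V) :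
    Ideal.Quotient.mk (srIdeal k K) (MvPolynomial.X v) ^ 2 =
      Ideal.Quotient.mk (srIdeal k K) (MvPolynomial.X v) *
        Ideal.Quotient.mk (srIdeal k K) (colorVar k c (c v)) := by
  rw [sq, ← map_mul, ← map_mul, eq_comm, Ideal.Quotient.mk_eq_mk_iff_sub_mem, colorVar, ← mul_sub,
    ← add_sum_erase {w | c w = c v} _ (mem_filter.2 ⟨mem_univ v, rfl⟩), add_sub_cancel_left,
    mul_sum]
  refine sum_mem fun w hw => ?_
  obtain ⟨hwv, hw⟩ := mem_erase.1 hw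
  exact X_mul_X_mem_srIdeal hc hwv.symm (mem_filter.1 hw).2.symm

theorem span_X_le_radical_span_colorVar (hc : ∀ σ ∈ K.faces, Set.InjOn c σ) :
    Ideal.span (Set.range fun v => Ideal.Quotient.mk (srIdeal k K) (MvPolynomial.X v)) ≤
      (Ideal.span
        (Set.range fun j => Ideal.Quotient.mk (srIdeal k K) (colorVar k c j))).radical := by
  refine Ideal.span_le.2 ?_
  rintro _ ⟨v, rfl⟩
  refine ⟨2, ?_⟩
  dsimp only
  rw [mk_X_sq hc v]
  exact Ideal.mul_mem_left _ _ (Ideal.subset_span ⟨c v, rfl⟩)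

theorem span_colorVar_le_span_X :
    Ideal.span (Set.range fun j => Ideal.Quotient.mk (srIdeal k K) (colorVar k c j)) ≤
      Ideal.span (Set.range fun v => Ideal.Quotient.mk (srIdeal k K) (MvPolynomial.X v)) := by
  refine Ideal.span_le.2 ?_
  rintro _ ⟨j, rfl⟩
  simp only [colorVar, map_sum]
  exact sum_mem fun v _ => Ideal.subset_span ⟨v, rfl⟩

theorem exists_isRegular_iff (hc : ∀ σ ∈ K.faces, Set.InjOn c σ) (hK : ∅ ∈ K.faces)
    (o : ι ↪ ℕ) {n : ℕ} :
    (∃ rs : List (SRRing k K), rs.length = n ∧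
      (∀ r ∈ rs, r ∈ Ideal.span
        (Set.range fun v => Ideal.Quotient.mk (srIdeal k K) (MvPolynomial.X v))) ∧
      RingTheory.Sequence.IsRegular (SRRing k K) rs) ↔
    ∀ i < n, KoszulVanish o (colorVar k c) (SRRing k K) i := by
  have hmk (i : ℕ) : KoszulVanish o (fun j => Ideal.Quotient.mk (srIdeal k K) (colorVar k c j))
      (SRRing k K) i ↔ KoszulVanish o (colorVar k c) (SRRing k K) i :=
    koszulVanish_algebraMap_iff o
  simp only [← hmk]
  constructor
  · rintro ⟨rs, rfl, hmem, hreg⟩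
    exact koszulVanish_of_isWeaklyRegular o rs
      (fun r hr => span_X_le_radical_span_colorVar hc (hmem r hr)) hreg.1
  · intro h
    obtain ⟨rs, hlen, hmem, hreg⟩ := exists_isWeaklyRegular_of_koszulVanish o n h
    have hmem_X := fun r hr => span_colorVar_le_span_X (hmem r hr)
    exact ⟨rs, hlen, hmem_X, hreg, top_ne_ofList_smul_top (span_X_ne_top hK) hmem_X⟩

theorem not_hVanish_zero_of_faces_eq (hK : K.faces = {∅}) : ¬ HVanish k K 0 := by
  rw [hVanish_iff_cochainVanish]
  intro h
  obtain ⟨_, hψ⟩ := h (fun _ => 1) fun σ hσ hcard => by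
    rw [hK, mem_singleton] at hσ
    exact absurd hcard (by simp [hσ])
  exact one_ne_zero (hψ ∅ (hK ▸ mem_singleton_self ∅) rfl)

theorem faces_restrict_eq_singleton (hK : ∅ ∈ K.faces) {C : Finset ι} (hC : ∀ v, c v ∈ C) :
    (K.restrict {v | c v ∉ C}).faces = {∅} := by
  ext σ
  rw [mem_restrict_color, mem_singleton]
  refine ⟨fun h => eq_empty_of_forall_notMem fun v hv => h.2 v hv (hC v), ?_⟩
  rintro rfl
  exact ⟨hK, fun v hv => absurd hv (notMem_empty v)⟩

theorem srDepth_eq_sInf_koszulVanish (hc : ∀ σ ∈ K.faces, Set.InjOn c σ) (hK : ∅ ∈ K.faces)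
    (o : ι ↪ ℕ) : srDepth k K = sInf {i | ¬ KoszulVanish o (colorVar k c) (SRRing k K) i} := by
  rw [← sSup_forall_lt_notMem, srDepth, depthIn]
  · simp only [exists_isRegular_iff hc hK o, Set.mem_ofPred_eq, not_not]
  · refine ⟨0 + #(univ.image c), fun h => ?_⟩
    rw [koszulVanish_iff_hVanish hc] at h
    exact not_hVanish_zero_of_faces_eq
      (faces_restrict_eq_singleton hK fun v => mem_image_of_mem c (mem_univ v)) (h _ 0 rfl)

theorem srDepth_eq_sInf_hVanish (hc : ∀ σ ∈ K.faces, Set.InjOn c σ) (hK : ∅ ∈ K.faces)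
    (o : ι ↪ ℕ) {C : Finset ι} (hC : ∀ v, c v ∈ C) :
    srDepth k K = sInf {n | ∃ (i : ℕ) (S : Finset ι), S ⊆ C ∧ n = i + #S ∧
      ¬ HVanish k (K.restrict {v | c v ∉ S}) i} := by
  rw [srDepth_eq_sInf_koszulVanish hc hK o]
  have hiff (n : ℕ) : ¬ KoszulVanish o (colorVar k c) (SRRing k K) n ↔
      ∃ S i, i + #S = n ∧ ¬ HVanish k (K.restrict {v | c v ∉ S}) i := by
    rw [koszulVanish_iff_hVanish hc]
    push Not
    rfl
  have hzero : ¬ HVanish k (K.restrict {v | c v ∉ C}) 0 :=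
    not_hVanish_zero_of_faces_eq (faces_restrict_eq_singleton hK hC)
  simp only [hiff]
  apply le_antisymm
  · refine le_csInf ⟨0 + #C, 0, C, Subset.rfl, rfl, hzero⟩ ?_
    rintro _ ⟨i, S, -, rfl, h⟩
    exact Nat.sInf_le ⟨S, i, rfl, h⟩
  · refine le_csInf ⟨0 + #C, C, 0, rfl, hzero⟩ ?_
    rintro _ ⟨S, i, rfl, h⟩
    refine le_trans (Nat.sInf_le ⟨i, S ∩ C, inter_subset_right, rfl, ?_⟩)
      (Nat.add_le_add_left (card_le_card inter_subset_left) i)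
    simpa only [mem_inter, hC, and_true] using h

end SComplex

/-! ### Order complexes -/

section OrderComplex

variable {P : Type} [DecidableEq P] [Fintype P] [PartialOrder P] [∀ a b : P, Decidable (a ≤ b)]

theorem mem_orderComplex {C : Finset P} :
    C ∈ (orderComplex P).faces ↔ ∀ a ∈ C, ∀ b ∈ C, a ≤ b ∨ b ≤ a :=
  mem_filter_univ C

theorem empty_mem_orderComplex : ∅ ∈ (orderComplex P).faces :=
  mem_orderComplex.2 fun a ha => absurd ha (notMem_empty a)

theorem pheight_lt_pheight {p q : P} (h : p < q) : pheight p < pheight q := by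
  obtain ⟨C, hC, hCp⟩ := exists_mem_eq_sup (univ.filter fun C : Finset P =>
    p ∈ C ∧ (∀ a ∈ C, a ≤ p) ∧ ∀ a ∈ C, ∀ b ∈ C, a ≤ b ∨ b ≤ a) ⟨{p}, by simp⟩ Finset.card
  obtain ⟨-, hle, hchain⟩ := (mem_filter_univ C).1 hC
  have hq : q ∉ C := fun hq => (hle q hq).not_gt h
  have hleq : ∀ a ∈ C, a ≤ q := fun a ha => (hle a ha).trans h.le
  rw [pheight, hCp, pheight, ← Nat.succ_le_iff, Nat.succ_eq_add_one, ← card_insert_of_notMem hq]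
  refine le_sup (f := Finset.card) ?_
  simp only [mem_filter, mem_univ, true_and, mem_insert, true_or, forall_eq_or_imp, le_refl]
  exact ⟨hleq, fun a ha => .inr (hleq a ha), fun a ha => ⟨.inl (hleq a ha), hchain a ha⟩⟩

theorem pheight_mem_Icc (p : P) : pheight p ∈ Icc 1 (pheightMax P) := by
  refine mem_Icc.2 ⟨?_, le_sup (f := pheight) (mem_univ p)⟩
  rw [← card_singleton p]
  exact le_sup (f := Finset.card) (by simp)

theorem injOn_pheight {C : Finset P} (hC : C ∈ (orderComplex P).faces) :
    Set.InjOn (pheight (P := P)) C := by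
  intro a ha b hb h
  by_contra hne
  rcases mem_orderComplex.1 hC a ha b hb with hab | hba
  · exact (pheight_lt_pheight (hab.lt_of_ne hne)).ne h
  · exact (pheight_lt_pheight (hba.lt_of_ne' hne)).ne h.symm

theorem srDepth_orderComplex (k : Type) [Field k] :
    SComplex.srDepth k (orderComplex P) = sInf {n : ℕ | ∃ (i : ℕ) (S : Finset ℕ),
        S ⊆ Icc 1 (pheightMax P) ∧ n = i + #S ∧
        ¬ SComplex.HVanish k ((orderComplex P).restrict {p | pheight p ∉ S}) i} :=
  SComplex.srDepth_eq_sInf_hVanish (fun _ => injOn_pheight) empty_mem_orderComplex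
    (.refl ℕ) pheight_mem_Icc

end OrderComplex

/-! ### Stars and deletions -/

namespace SComplex

section Star

variable {V : Type} [DecidableEq V]

theorem faces_injective : Function.Injective (faces (V := V)) := by
  rintro ⟨_, _⟩ ⟨_, _⟩ rfl
  rfl

theorem eq_of_mem_faces_iff {A B : SComplex V} (h : ∀ G, G ∈ A.faces ↔ G ∈ B.faces) : A = B :=
  faces_injective (Finset.ext h)

/-- The star of `F` in `K`: the faces whose union with `F` is again a face. -/
def star (K : SComplex V) (F : Finset V) : SComplex V where
  faces := {G ∈ K.faces | G ∪ F ∈ K.faces}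
  down_closed := by
    intro s t hs hts
    rw [mem_filter] at hs ⊢
    exact ⟨K.down_closed hs.1 hts, K.down_closed hs.2 (union_subset_union_left hts)⟩

variable {K : SComplex V} {F G : Finset V} {v : V}

theorem mem_star : G ∈ (K.star F).faces ↔ G ∪ F ∈ K.faces := by
  rw [star, mem_filter]
  exact and_iff_right_of_imp fun h => K.down_closed h subset_union_left

theorem star_empty (K : SComplex V) : K.star ∅ = K :=
  eq_of_mem_faces_iff fun G => by rw [mem_star, union_empty]

theorem star_star (K : SComplex V) (F G : Finset V) : (K.star F).star G = K.star (G ∪ F) :=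
  eq_of_mem_faces_iff fun H => by rw [mem_star, mem_star, mem_star, union_assoc]

theorem mem_deleteAbove {A : Finset (Finset V)} :
    G ∈ (K.deleteAbove A).faces ↔ G ∈ K.faces ∧ ∀ s ∈ A, ¬ s ⊆ G := by
  rw [deleteAbove, mem_filter]

theorem mem_deleteAbove_singleton :
    G ∈ (K.deleteAbove {F}).faces ↔ G ∈ K.faces ∧ ¬ F ⊆ G := by
  simp only [mem_deleteAbove, mem_singleton, forall_eq]

theorem mem_deleteAbove_vertex :
    G ∈ (K.deleteAbove {{v}}).faces ↔ G ∈ K.faces ∧ v ∉ G := by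
  rw [mem_deleteAbove_singleton, singleton_subset_iff]

end Star

/-! ### The exact sequence of the star of a face -/

section ExactSequence

variable {V : Type} [DecidableEq V] {k : Type} [Field k] {K : SComplex V} {F : Finset V}

theorem monomial_mul_mem_srIdeal_iff {p : MvPolynomial V k} :
    MvPolynomial.monomial (faceExp F) 1 * p ∈ srIdeal k K ↔ p ∈ srIdeal k (K.star F) := by
  have hsupp (m : V →₀ ℕ) : (m + faceExp F).support = m.support ∪ F := by
    ext v
    by_cases hv : v ∈ F <;> simp [faceExp_apply, hv]
  simp only [mem_srIdeal_iff_coeff, mem_star, ← hsupp]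
  refine ⟨fun h m hm => ?_, fun h m hm => ?_⟩
  · simpa only [add_comm m, MvPolynomial.coeff_monomial_mul, one_mul] using h _ hm
  · rw [MvPolynomial.coeff_monomial_mul', one_mul]
    split_ifs with hF
    · exact h _ (by rwa [tsub_add_cancel_of_le hF])
    · rfl

/-- Multiplication by the squarefree monomial of `F`, which identifies the Stanley–Reisner ring of
the star of `F` with an ideal of the Stanley–Reisner ring of `K`. -/
noncomputable def starMul (k : Type) [Field k] (K : SComplex V) (F : Finset V) :
    SRRing k (K.star F) →ₗ[MvPolynomial V k] SRRing k K :=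
  Submodule.mapQ _ _ (LinearMap.mulLeft _ (MvPolynomial.monomial (faceExp F) 1))
    fun _ => monomial_mul_mem_srIdeal_iff.2

/-- The quotient map from the Stanley–Reisner ring of `K` to that of the subcomplex of the faces
not containing `F`. -/
noncomputable def deleteProj (k : Type) [Field k] (K : SComplex V) (F : Finset V) :
    SRRing k K →ₗ[MvPolynomial V k] SRRing k (K.deleteAbove {F}) :=
  Submodule.mapQ _ _ LinearMap.id fun _ hp => mem_srIdeal_iff_coeff.2 fun m hm =>
    mem_srIdeal_iff_coeff.1 hp m (mem_deleteAbove_singleton.1 hm).1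

theorem deleteProj_surjective : Function.Surjective (deleteProj k K F) := fun x => by
  obtain ⟨p, rfl⟩ := Ideal.Quotient.mk_surjective x
  exact ⟨Ideal.Quotient.mk _ p, rfl⟩

theorem deleteProj_eq_zero_iff {x : SRRing k K} :
    deleteProj k K F x = 0 ↔
      ∃ y : SRRing k K, (MvPolynomial.monomial (faceExp F) 1 : MvPolynomial V k) • y = x := by
  obtain ⟨p, rfl⟩ := Ideal.Quotient.mk_surjective x
  have hzero : deleteProj k K F (Ideal.Quotient.mk _ p) = 0 ↔
      ∀ m : V →₀ ℕ, m.support ∈ K.faces ∧ ¬ F ⊆ m.support → p.coeff m = 0 := by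
    simp only [← mem_deleteAbove_singleton, ← mem_srIdeal_iff_coeff]
    exact Ideal.Quotient.eq_zero_iff_mem
  have hrange (q : MvPolynomial V k) :
      (MvPolynomial.monomial (faceExp F) 1 : MvPolynomial V k) • Ideal.Quotient.mk (srIdeal k K) q =
        Ideal.Quotient.mk _ p ↔ ∀ m : V →₀ ℕ, m.support ∈ K.faces →
          (MvPolynomial.monomial (faceExp F) 1 * q).coeff m = p.coeff m := by
    simp only [← sub_eq_zero (b := MvPolynomial.coeff _ p), ← MvPolynomial.coeff_sub,
      ← mem_srIdeal_iff_coeff]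
    exact Ideal.Quotient.mk_eq_mk_iff_sub_mem _ _
  rw [hzero, Ideal.Quotient.mk_surjective.exists]
  simp only [hrange, MvPolynomial.coeff_monomial_mul', faceExp_le_iff, one_mul]
  refine ⟨fun h => ⟨p.divMonomial (faceExp F), fun m hm => ?_⟩, fun ⟨q, hq⟩ m hm => ?_⟩
  · split_ifs with hF
    · rw [MvPolynomial.coeff_divMonomial, add_tsub_cancel_of_le (faceExp_le_iff.2 hF)]
    · exact (h m ⟨hm, hF⟩).symm
  · rw [← hq m hm.1, if_neg hm.2]

theorem starMul_injective : Function.Injective (starMul k K F) := by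
  refine (injective_iff_map_eq_zero _).2 fun x hx => ?_
  obtain ⟨p, rfl⟩ := Ideal.Quotient.mk_surjective x
  exact Ideal.Quotient.eq_zero_iff_mem.2
    (monomial_mul_mem_srIdeal_iff.1 (Ideal.Quotient.eq_zero_iff_mem.1 hx))

theorem exact_starMul_deleteProj : Function.Exact (starMul k K F) (deleteProj k K F) := by
  intro x
  rw [deleteProj_eq_zero_iff, (Ideal.Quotient.mk_surjective (I := srIdeal k K)).exists]
  exact (Ideal.Quotient.mk_surjective (I := srIdeal k (K.star F))).exists
    (p := fun y => starMul k K F y = x).symm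

theorem lsmul_monomial_injective (hK : K.star F = K) : Function.Injective
    (LinearMap.lsmul _ (SRRing k K) (MvPolynomial.monomial (faceExp F) 1 : MvPolynomial V k)) := by
  refine (injective_iff_map_eq_zero _).2 fun x hx => ?_
  obtain ⟨p, rfl⟩ := Ideal.Quotient.mk_surjective x
  have hp := monomial_mul_mem_srIdeal_iff.1 (Ideal.Quotient.eq_zero_iff_mem.1 hx)
  rw [hK] at hp
  exact Ideal.Quotient.eq_zero_iff_mem.2 hp

theorem exact_lsmul_monomial_deleteProj : Function.Exact
    (LinearMap.lsmul _ (SRRing k K) (MvPolynomial.monomial (faceExp F) 1 : MvPolynomial V k))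
    (deleteProj k K F) :=
  fun _ => deleteProj_eq_zero_iff

end ExactSequence

/-! ### Depth of stars and deletions -/

section DepthGE

variable {V : Type} [DecidableEq V] [Fintype V] {k : Type} [Field k] {K : SComplex V}
  {F : Finset V} {v : V} {d : ℕ}

variable (k) in
/-- The depth of the Stanley–Reisner ring of `K` is at least `d`, in the form of the vanishing of
the Koszul cohomology with respect to the variables below degree `d`. For the complex without
faces, whose Stanley–Reisner ring is zero, this holds for all `d`. -/
def DepthGE (K : SComplex V) (d : ℕ) : Prop :=
  ∀ i < d, KoszulVanish (arbIndex V) (colorVar k id) (SRRing k K) i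

theorem srDepth_eq_sSup_depthGE (hK : ∅ ∈ K.faces) : srDepth k K = sSup {d | DepthGE k K d} := by
  simp only [srDepth, depthIn, exists_isRegular_iff (fun _ _ => Set.injOn_id _) hK (arbIndex V)]
  rfl

theorem DepthGE.mono (h : DepthGE k K d) {e : ℕ} (hed : e ≤ d) : DepthGE k K e :=
  fun i hi => h i (hi.trans_le hed)

theorem DepthGE.of_star_of_deleteAbove (hstar : DepthGE k (K.star F) d)
    (hdel : DepthGE k (K.deleteAbove {F}) d) : DepthGE k K d := fun i hi =>
  koszulVanish_middle _ starMul_injective deleteProj_surjective exact_starMul_deleteProj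
    (hstar i hi) (hdel i hi)

theorem DepthGE.deleteAbove (h : DepthGE k K d) (hstar : DepthGE k (K.star F) (d + 1)) :
    DepthGE k (K.deleteAbove {F}) d := fun i hi =>
  koszulVanish_right _ starMul_injective deleteProj_surjective exact_starMul_deleteProj
    (h i hi) (hstar (i + 1) (by lia))

theorem DepthGE.star_of_deleteAbove (h : DepthGE k K d)
    (hdel : ∀ e, e + 1 = d → DepthGE k (K.deleteAbove {F}) e) : DepthGE k (K.star F) d :=
  fun i hi => koszulVanish_left _ starMul_injective deleteProj_surjective exact_starMul_deleteProj
    (h i hi) fun j _ => hdel (d - 1) (by lia) j (by lia)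

theorem depthGE_iff_hVanish : DepthGE k K d ↔
    ∀ (S : Finset V) (j : ℕ), j + #S < d → HVanish k (K.restrict {v | v ∉ S}) j := by
  simp only [DepthGE, koszulVanish_iff_hVanish (fun _ _ => Set.injOn_id _), id]
  exact ⟨fun h S j hj => h _ hj S j rfl, fun h i hi S j hj => h S j (hj ▸ hi)⟩

theorem DepthGE.deleteAbove_vertex (h : DepthGE k K (d + 1)) (v : V) :
    DepthGE k (K.deleteAbove {{v}}) d := by
  rw [depthGE_iff_hVanish] at h ⊢
  intro S j hj
  have hrestrict : (K.deleteAbove {{v}}).restrict {w | w ∉ S} = K.restrict {w | w ∉ insert v S} :=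
    eq_of_mem_faces_iff fun G => by
      simp only [mem_restrict, subset_iff, mem_filter_univ, mem_deleteAbove_vertex, mem_insert]
      grind
  rw [hrestrict]
  exact h _ _ (by grind [card_insert_le v S])

theorem DepthGE.star (h : DepthGE k K d) (F : Finset V) : DepthGE k (K.star F) d := by
  induction F using Finset.induction_on with
  | empty => rwa [star_empty]
  | insert v F _ ih =>
    rw [insert_eq, ← star_star]
    exact ih.star_of_deleteAbove fun e he => (he ▸ ih).deleteAbove_vertex v

theorem colorVar_id (v : V) : colorVar k id v = MvPolynomial.X v := by
  simp only [colorVar, id, filter_eq', mem_univ, if_true, sum_singleton]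

/-- Multiplication by the variable of the apex is injective on the Stanley–Reisner ring, but zero
on Koszul cohomology. -/
theorem DepthGE.cone (hv : K.star {v} = K) (h : DepthGE k (K.deleteAbove {{v}}) d) :
    DepthGE k K (d + 1) := by
  intro i hi f hf
  obtain ⟨g, hg⟩ := exists_smul_eq_koszulD _ hf (Ideal.subset_span ⟨v, rfl⟩)
  refine exists_eq_koszulD_of_map_eq _ (lsmul_monomial_injective hv) deleteProj_surjective
    exact_lsmul_monomial_deleteProj (fun j _ => h j (by lia)) (g := g) fun T hT => ?_
  rw [← hg T hT, colorVar_id, faceExp, sum_singleton]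
  rfl

end DepthGE

/-! ### Stellar subdivisions -/

section Stellar

variable {V : Type} [DecidableEq V] [Fintype V] {K : SComplex V} {F G : Finset V} {v w : V}

/-- The complex obtained from `K` by gluing the cone with apex `v` over the star of `F` to it,
for `v` not a vertex of `K`. -/
def starCone (K : SComplex V) (F : Finset V) (v : V) : SComplex V where
  faces := {G | G.erase v ∈ K.faces ∧ (v ∈ G → G.erase v ∪ F ∈ K.faces)}
  down_closed := by
    intro s t hs hts
    rw [mem_filter_univ] at hs ⊢
    have herase := erase_subset_erase v hts
    exact ⟨K.down_closed hs.1 herase,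
      fun hv => K.down_closed (hs.2 (hts hv)) (union_subset_union_left herase)⟩

/-- The stellar subdivision of `K` at the face `F`, with new vertex `v`. -/
def stellar (K : SComplex V) (F : Finset V) (v : V) : SComplex V :=
  (K.starCone F v).deleteAbove {F}

theorem mem_starCone :
    G ∈ (K.starCone F v).faces ↔ G.erase v ∈ K.faces ∧ (v ∈ G → G.erase v ∪ F ∈ K.faces) :=
  mem_filter_univ _

theorem mem_stellar : G ∈ (K.stellar F v).faces ↔
    (G.erase v ∈ K.faces ∧ (v ∈ G → G.erase v ∪ F ∈ K.faces)) ∧ ¬ F ⊆ G := by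
  rw [stellar, mem_deleteAbove_singleton, mem_starCone]

theorem deleteAbove_starCone_apex (hv : ∀ G ∈ K.faces, v ∉ G) :
    (K.starCone F v).deleteAbove {{v}} = K :=
  eq_of_mem_faces_iff fun G => by
    rw [mem_deleteAbove_vertex, mem_starCone]
    grind [erase_eq_of_notMem]

theorem mem_star_starCone (hvF : v ∉ F) :
    G ∈ ((K.starCone F v).star F).faces ↔ G.erase v ∪ F ∈ K.faces := by
  rw [mem_star, mem_starCone, erase_union_distrib, erase_eq_of_notMem hvF, union_assoc, union_self,
    and_iff_left_of_imp fun h _ => h]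

theorem star_starCone_apex (hvF : v ∉ F) : (K.starCone F v).star {v} = (K.starCone F v).star F :=
  eq_of_mem_faces_iff fun G => by
    rw [mem_star_starCone hvF, mem_star, mem_starCone, erase_union_distrib, erase_singleton,
      union_empty, and_iff_right_of_imp fun h => K.down_closed (h (by simp)) subset_union_left]
    simp

theorem deleteAbove_star_starCone_apex (hv : ∀ G ∈ K.faces, v ∉ G) (hvF : v ∉ F) :
    ((K.starCone F v).star F).deleteAbove {{v}} = K.star F :=
  eq_of_mem_faces_iff fun G => by
    rw [mem_deleteAbove_vertex, mem_star_starCone hvF, mem_star]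
    grind [erase_eq_of_notMem]

theorem deleteAbove_star_starCone_vertex (hvF : v ∉ F) (hw : w ∈ F) :
    ((K.starCone F v).star F).deleteAbove {{w}} = (K.stellar F v).star (insert v (F.erase w)) :=
  eq_of_mem_faces_iff fun G => by
    have herase : (G ∪ insert v (F.erase w)).erase v = G.erase v ∪ F.erase w := by grind
    have hunion : G.erase v ∪ F.erase w ∪ F = G.erase v ∪ F := by grind
    have hsub : F ⊆ G ∪ insert v (F.erase w) ↔ w ∈ G := by grind
    have hv : v ∈ G ∪ insert v (F.erase w) := by simp
    rw [mem_deleteAbove_vertex, mem_star_starCone hvF, mem_star, mem_stellar, herase, hunion, hsub,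
      imp_iff_right hv, and_iff_right_of_imp fun h =>
        K.down_closed h (union_subset_union_right (erase_subset w F))]

variable {k : Type} [Field k] {d : ℕ}

theorem DepthGE.star_starCone (h : DepthGE k K d) (hv : ∀ G ∈ K.faces, v ∉ G) (hvF : v ∉ F) :
    DepthGE k ((K.starCone F v).star F) (d + 1) := by
  refine DepthGE.cone (v := v) ?_ ?_
  · rw [← star_starCone_apex hvF, star_star, union_self]
  · rw [deleteAbove_star_starCone_apex hv hvF]
    exact h.star F

theorem DepthGE.star_starCone_of_stellar (h : DepthGE k (K.stellar F v) d) (hF : F.Nonempty)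
    (hvF : v ∉ F) : DepthGE k ((K.starCone F v).star F) (d + 1) := by
  obtain ⟨w, hw⟩ := hF
  refine DepthGE.cone (v := w) ?_ ?_
  · rw [star_star, union_eq_right.2 (singleton_subset_iff.2 hw)]
  · rw [deleteAbove_star_starCone_vertex hvF hw]
    exact h.star _

/-- Both `K` and its stellar subdivision arise from `K.starCone F v` by deleting the star of a
face, the star being in both cases the same cone. -/
theorem depthGE_stellar_iff (hv : ∀ G ∈ K.faces, v ∉ G) (hF : F.Nonempty) (hvF : v ∉ F) :
    DepthGE k (K.stellar F v) d ↔ DepthGE k K d := by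
  have hapex := deleteAbove_starCone_apex (F := F) hv
  have hstar := star_starCone_apex (K := K) hvF
  refine ⟨fun h => ?_, fun h => ?_⟩
  · have hcone := h.star_starCone_of_stellar hF hvF
    have hL : DepthGE k (K.starCone F v) d := (hcone.mono d.le_succ).of_star_of_deleteAbove h
    exact hapex ▸ hL.deleteAbove (hstar ▸ hcone)
  · have hcone := h.star_starCone hv hvF
    have hL : DepthGE k (K.starCone F v) d :=
      (hstar ▸ hcone.mono d.le_succ).of_star_of_deleteAbove (hapex.symm ▸ h)
    exact hL.deleteAbove hcone

end Stellar
end SComplex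

/-! ### Change of vertex set -/

namespace SComplex

section Map

variable {k : Type} [Field k] {V W : Type} [DecidableEq V] [DecidableEq W] {K : SComplex V}

/-- The complex `K`, transported along an embedding of its vertices. -/
def map (f : V ↪ W) (K : SComplex V) : SComplex W where
  faces := K.faces.image (image f)
  down_closed := by
    intro s t hs hts
    obtain ⟨σ, hσ, rfl⟩ := mem_image.1 hs
    obtain ⟨τ, hτ, rfl⟩ := subset_image_iff.1 hts
    exact mem_image_of_mem _ (K.down_closed hσ (coe_subset.1 hτ))

theorem mem_map {f : V ↪ W} {τ : Finset W} :
    τ ∈ (K.map f).faces ↔ ∃ σ ∈ K.faces, σ.image f = τ :=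
  mem_image

theorem forall_mem_map {f : V ↪ W} {p : Finset W → Prop} :
    (∀ τ ∈ (K.map f).faces, p τ) ↔ ∀ σ ∈ K.faces, p (σ.image f) :=
  forall_mem_image

theorem empty_mem_map {f : V ↪ W} : ∅ ∈ (K.map f).faces ↔ ∅ ∈ K.faces := by
  simp only [mem_map, image_eq_empty, exists_eq_right]

theorem signedD_image (f : V ↪ W) (o : W → ℕ) (φ : Finset W → k) (σ : Finset V) :
    signedD (koszulSign o) φ (σ.image f) =
      signedD (koszulSign (o ∘ f)) (fun τ => φ (τ.image f)) σ := by
  rw [signedD, signedD, sum_image f.injective.injOn]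
  refine sum_congr rfl fun v _ => ?_
  rw [image_erase f.injective, koszulSign_eq_prod, koszulSign_eq_prod,
    prod_image f.injective.injOn]
  rfl

theorem cochainVanish_map_iff (f : V ↪ W) (o : W → ℕ) {i : ℕ} :
    CochainVanish k (koszulSign o) (K.map f) i ↔ CochainVanish k (koszulSign (o ∘ f)) K i := by
  have hsurj : Function.Surjective fun (φ : Finset W → k) (σ : Finset V) => φ (σ.image f) :=
    (image_injective f.injective).surjective_comp_right
  simp only [CochainVanish, forall_mem_map, card_image_of_injective _ f.injective, signedD_image,
    hsurj.forall, hsurj.exists]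

variable [Fintype V] [Fintype W]

theorem hVanish_map_iff (f : V ↪ W) {i : ℕ} : HVanish k (K.map f) i ↔ HVanish k K i := by
  rw [hVanish_iff_cochainVanish, cochainVanish_map_iff]
  exact cochainVanish_koszulSign_iff_hVanish fun _ _ =>
    ((arbIndex W).injective.comp f.injective).injOn

theorem restrict_map (f : V ↪ W) (S : Finset W) :
    (K.map f).restrict {w | w ∉ S} = (K.restrict {v | f v ∉ S}).map f :=
  eq_of_mem_faces_iff fun τ => by
    simp only [mem_restrict, mem_map, subset_iff, mem_filter_univ]
    grind

omit [Fintype V] [Fintype W] in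
theorem srDepth_map [Finite V] [Finite W] (f : V ↪ W) (hK : ∅ ∈ K.faces) :
    srDepth k (K.map f) = srDepth k K := by
  cases nonempty_fintype V
  cases nonempty_fintype W
  rw [srDepth_eq_sInf_hVanish (c := f) (fun _ _ => f.injective.injOn) hK (arbIndex W)
      fun _ => mem_univ _,
    srDepth_eq_sInf_hVanish (c := id) (fun _ _ => Set.injOn_id _) (empty_mem_map.2 hK) (arbIndex W)
      fun _ => mem_univ _]
  simp only [id, restrict_map, hVanish_map_iff]

end Map

end SComplex

/-! ### Barycentric subdivision by stellar subdivisions -/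

namespace SComplex

section PartialSubdivision

variable {V : Type} [DecidableEq V] [Fintype V] {K : SComplex V} {N C : Finset (Finset V)}
  {F σ : Finset V} {x : V}

/-- The vertices of the original complex among the vertices of a face of a subdivision. -/
def singletonPart (C : Finset (Finset V)) : Finset V := {x | {x} ∈ C}

theorem mem_singletonPart : x ∈ singletonPart C ↔ {x} ∈ C :=
  mem_filter_univ x

theorem image_singleton_subset_iff : F.image singleton ⊆ C ↔ F ⊆ singletonPart C := by
  simp only [subset_iff, forall_mem_image, mem_singletonPart]

theorem singletonPart_image_singleton (σ : Finset V) : singletonPart (σ.image singleton) = σ := by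
  ext x
  simp [mem_singletonPart]

theorem singletonPart_erase (hF : #F ≠ 1) : singletonPart (C.erase F) = singletonPart C := by
  ext x
  rw [mem_singletonPart, mem_singletonPart, mem_erase, and_iff_right]
  rintro rfl
  exact hF (card_singleton x)

theorem singletonPart_erase_union (hF : #F ≠ 1) (σ : Finset V) :
    singletonPart (C.erase F ∪ σ.image singleton) = singletonPart C ∪ σ := by
  ext x
  rw [mem_singletonPart, mem_union, ← mem_singletonPart, singletonPart_erase hF, mem_union,
    ← mem_singletonPart, singletonPart_image_singleton]

/-- The subdivision of `K` at the faces in `N`, a family of faces of cardinality at least `2`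
closed under passing to larger faces. A vertex `x` of `K` is represented by `{x}`, and the new
vertex subdividing a face `s` by `s` itself. -/
def partialSubdivision (K : SComplex V) (N : Finset (Finset V)) : SComplex (Finset V) where
  faces := {C | (∀ s ∈ C, #s = 1 ∨ s ∈ N) ∧ (∀ s ∈ C, ∀ t ∈ C, t ∈ N → s ⊆ t ∨ t ⊆ s) ∧
    singletonPart C ∈ (K.deleteAbove N).faces}
  down_closed := by
    intro C D hC hD
    rw [mem_filter_univ] at hC ⊢
    exact ⟨fun s hs => hC.1 s (hD hs), fun s hs t ht => hC.2.1 s (hD hs) t (hD ht),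
      (K.deleteAbove N).down_closed hC.2.2 fun x hx =>
        mem_singletonPart.2 (hD (mem_singletonPart.1 hx))⟩

theorem mem_partialSubdivision : C ∈ (K.partialSubdivision N).faces ↔
    (∀ s ∈ C, #s = 1 ∨ s ∈ N) ∧ (∀ s ∈ C, ∀ t ∈ C, t ∈ N → s ⊆ t ∨ t ⊆ s) ∧
      singletonPart C ∈ (K.deleteAbove N).faces :=
  mem_filter_univ _

theorem erase_mem_partialSubdivision (hF : #F ≠ 1) (hC : C ∈ (K.partialSubdivision N).faces) :
    C.erase F ∈ (K.partialSubdivision (N.erase F)).faces := by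
  simp only [mem_partialSubdivision, singletonPart_erase hF, mem_deleteAbove] at hC ⊢
  grind

theorem singletonPart_subset (hC : C ∈ (K.partialSubdivision N).faces) (hσ : σ ∈ N) (hσC : σ ∈ C)
    (hσ2 : 2 ≤ #σ) : singletonPart C ⊆ σ := fun x hx => by
  rcases (mem_partialSubdivision.1 hC).2.1 _ (mem_singletonPart.1 hx) σ hσC hσ with h | h
  · exact singleton_subset_iff.1 h
  · have := card_le_card h
    rw [card_singleton] at this
    lia

theorem erase_union_mem_partialSubdivision (hF : Minimal (· ∈ N) F) (hF2 : 2 ≤ #F)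
    (hFK : F ∈ K.faces) (hC : C ∈ (K.partialSubdivision N).faces) (hFC : F ∈ C) :
    C.erase F ∪ F.image singleton ∈ (K.partialSubdivision (N.erase F)).faces := by
  have hsub := singletonPart_subset hC hF.1 hFC hF2
  obtain ⟨hvert, hcomp, -⟩ := mem_partialSubdivision.1 hC
  have hcompF : ∀ t ∈ C, t ∈ N → F ⊆ t := fun t ht htN =>
    (hcomp F hFC t ht htN).elim id fun h => hF.2 htN h
  have hone : ∀ s ∈ F.image singleton, #s = 1 := forall_mem_image.2 fun x _ => card_singleton x
  have hsubF : ∀ s ∈ F.image singleton, s ⊆ F :=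
    forall_mem_image.2 fun x hx => singleton_subset_iff.2 hx
  rw [mem_partialSubdivision, singletonPart_erase_union (by lia), union_eq_right.2 hsub,
    mem_deleteAbove]
  refine ⟨by grind, fun s hs t ht htN => ?_, hFK, fun s hs hsF => ?_⟩
  · obtain ⟨htF, htN⟩ := mem_erase.1 htN
    have htC : t ∈ C := (mem_union.1 ht).elim mem_of_mem_erase fun h =>
      absurd ((hsubF t h).antisymm (hF.2 htN (hsubF t h))) htF
    rcases mem_union.1 hs with h | h
    · exact hcomp s (mem_of_mem_erase h) t htC htN
    · exact .inl ((hsubF s h).trans (hcompF t htC htN))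
  · exact ne_of_mem_erase hs (hsF.antisymm (hF.2 (mem_of_mem_erase hs) hsF))

theorem mem_partialSubdivision_of_erase (hN : ∀ s ∈ N, 2 ≤ #s) (hF : F ∈ N)
    (hup : ∀ t ∈ K.faces, F ⊆ t → t ∈ N)
    (herase : C.erase F ∈ (K.partialSubdivision (N.erase F)).faces)
    (hunion : F ∈ C → C.erase F ∪ F.image singleton ∈ (K.partialSubdivision (N.erase F)).faces)
    (hFC : ¬ F ⊆ singletonPart C) : C ∈ (K.partialSubdivision N).faces := by
  have hF1 : #F ≠ 1 := by grind
  have hpart := singletonPart_erase_union (C := C) hF1 F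
  have hcompF : F ∈ C → ∀ t ∈ C, t ∈ N → t ≠ F → F ⊆ t := fun h t ht htN htF =>
    (subset_union_right.trans hpart.ge).trans (singletonPart_subset (hunion h)
      (mem_erase.2 ⟨htF, htN⟩) (mem_union_left _ (mem_erase.2 ⟨htF, ht⟩)) (hN t htN))
  have hsub : F ∈ C → singletonPart C ⊆ F := fun h => by
    have hface := (mem_partialSubdivision.1 (hunion h)).2.2
    rw [hpart, mem_deleteAbove] at hface
    by_contra hne
    exact hface.2 _ (mem_erase.2 ⟨fun h' => hne (union_eq_right.1 h'),
      hup _ hface.1 subset_union_right⟩) subset_rfl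
  rw [mem_partialSubdivision, singletonPart_erase hF1, mem_deleteAbove] at herase
  obtain ⟨hvert, hcomp, hface, hdel⟩ := herase
  rw [mem_partialSubdivision, mem_deleteAbove]
  refine ⟨by grind, fun s hs t ht htN => ?_, hface, by grind⟩
  by_cases htF : t = F
  · have hs1 : #s = 1 → s ⊆ F := fun h => by
      obtain ⟨x, rfl⟩ := card_eq_one.1 h
      exact singleton_subset_iff.2 (hsub (htF ▸ ht) (mem_singletonPart.2 hs))
    grind
  · grind

theorem partialSubdivision_eq_stellar (hN : ∀ s ∈ N, 2 ≤ #s)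
    (hup : ∀ s ∈ N, ∀ t ∈ K.faces, s ⊆ t → t ∈ N) (hF : Minimal (· ∈ N) F) (hFK : F ∈ K.faces) :
    K.partialSubdivision N = (K.partialSubdivision (N.erase F)).stellar (F.image singleton) F := by
  have hF2 := hN F hF.1
  have hF1 : #F ≠ 1 := by lia
  refine eq_of_mem_faces_iff fun C => ?_
  rw [mem_stellar, image_singleton_subset_iff]
  refine ⟨fun hC => ⟨⟨erase_mem_partialSubdivision hF1 hC,
    erase_union_mem_partialSubdivision hF hF2 hFK hC⟩, ?_⟩,
    fun ⟨⟨herase, hunion⟩, hFC⟩ => mem_partialSubdivision_of_erase hN hF.1 (hup F hF.1)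
      herase hunion hFC⟩
  exact (mem_deleteAbove.1 (mem_partialSubdivision.1 hC).2.2).2 F hF.1

theorem partialSubdivision_empty (K : SComplex V) :
    K.partialSubdivision ∅ = K.map ⟨singleton, singleton_injective⟩ := by
  refine eq_of_mem_faces_iff fun C => ?_
  rw [mem_partialSubdivision, mem_map, mem_deleteAbove]
  refine ⟨fun h => ⟨singletonPart C, h.2.2.1, ?_⟩, ?_⟩
  · refine (image_singleton_subset_iff.2 subset_rfl).antisymm fun s hs => ?_
    obtain ⟨x, rfl⟩ := card_eq_one.1 ((h.1 s hs).resolve_right (notMem_empty s))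
    exact mem_image_of_mem _ (mem_singletonPart.2 hs)
  · rintro ⟨σ, hσ, rfl⟩
    have hpart : singletonPart (σ.image singleton) = σ := singletonPart_image_singleton σ
    simpa [hpart] using hσ

theorem depthGE_partialSubdivision_iff {k : Type} [Field k] {d : ℕ} (hN : ∀ s ∈ N, 2 ≤ #s)
    (hNK : N ⊆ K.faces) (hup : ∀ s ∈ N, ∀ t ∈ K.faces, s ⊆ t → t ∈ N) :
    DepthGE k (K.partialSubdivision N) d ↔ DepthGE k (K.partialSubdivision ∅) d := by
  induction hn : #N generalizing N with
  | zero => rw [card_eq_zero.1 hn]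
  | succ n ih =>
    obtain ⟨F, hF⟩ := exists_minimal (card_pos.1 (hn ▸ n.succ_pos : 0 < #N))
    have hF2 := hN F hF.1
    have hnew : ∀ C ∈ (K.partialSubdivision (N.erase F)).faces, F ∉ C := fun C hC hFC => by
      rcases (mem_partialSubdivision.1 hC).1 F hFC with h | h
      · lia
      · exact notMem_erase F N h
    have hsingleton : F ∉ F.image singleton := by grind
    have hup' : ∀ s ∈ N.erase F, ∀ t ∈ K.faces, s ⊆ t → t ∈ N.erase F := fun s hs t ht hst => by
      obtain ⟨hsF, hsN⟩ := mem_erase.1 hs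
      refine mem_erase.2 ⟨?_, hup s hsN t ht hst⟩
      rintro rfl
      exact hsF (hst.antisymm (hF.2 hsN hst))
    have hFne : F.Nonempty := card_pos.1 (by lia)
    rw [partialSubdivision_eq_stellar hN hup hF (hNK hF.1),
      depthGE_stellar_iff hnew (hFne.image _) hsingleton,
      ih (fun s hs => hN s (mem_of_mem_erase hs)) ((erase_subset F N).trans hNK) hup'
        (by rw [card_erase_of_mem hF.1, hn, n.add_sub_cancel])]

theorem mem_map_orderComplex_facePoset :
    C ∈ ((orderComplex K.FacePoset).map (.subtype _)).faces ↔
      (∀ s ∈ C, s ∈ K.faces ∧ s ≠ ∅) ∧ ∀ s ∈ C, ∀ t ∈ C, s ⊆ t ∨ t ⊆ s := by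
  rw [mem_map]
  refine ⟨?_, fun ⟨hface, hchain⟩ => ⟨C.subtype _, ?_, ?_⟩⟩
  · rintro ⟨D, hD, rfl⟩
    rw [mem_orderComplex] at hD
    simp only [forall_mem_image]
    exact ⟨fun s _ => s.2, hD⟩
  · simp only [mem_orderComplex, mem_subtype]
    exact fun s hs _ => hchain s hs _
  · ext s
    simp only [mem_image, mem_subtype]
    exact ⟨fun ⟨_, ht, hts⟩ => hts ▸ ht, fun hs => ⟨⟨s, hface s hs⟩, hs, rfl⟩⟩

theorem isChain_of_mem_partialSubdivision
    (hC : C ∈ (K.partialSubdivision {s ∈ K.faces | 2 ≤ #s}).faces) :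
    (∀ s ∈ C, s ∈ K.faces ∧ s ≠ ∅) ∧ ∀ s ∈ C, ∀ t ∈ C, s ⊆ t ∨ t ⊆ s := by
  simp only [mem_partialSubdivision, mem_deleteAbove, mem_filter] at hC
  obtain ⟨hvert, hcomp, hface, hdel⟩ := hC
  have hone : #(singletonPart C) ≤ 1 := by
    by_contra hcard
    exact hdel _ ⟨hface, by lia⟩ subset_rfl
  have hvert' : ∀ s ∈ C, (s ∈ K.faces ∧ 2 ≤ #s) ∨ ∃ x ∈ singletonPart C, s = {x} := by
    intro s hs
    refine (hvert s hs).symm.imp_right fun h => ?_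
    obtain ⟨x, rfl⟩ := card_eq_one.1 h
    exact ⟨x, mem_singletonPart.2 hs, rfl⟩
  refine ⟨fun s hs => ?_, fun s hs t ht => ?_⟩
  · rcases hvert' s hs with h | ⟨x, hx, rfl⟩
    · exact ⟨h.1, nonempty_iff_ne_empty.1 (card_pos.1 (by lia))⟩
    · exact ⟨K.down_closed hface (singleton_subset_iff.2 hx), singleton_ne_empty x⟩
  · rcases hvert' s hs with h | ⟨x, hx, rfl⟩
    · exact (hcomp t ht s hs h).symm
    rcases hvert' t ht with h | ⟨y, hy, rfl⟩
    · exact hcomp _ hs t ht h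
    · exact .inl (by rw [card_le_one.1 hone x hx y hy])

theorem mem_partialSubdivision_of_isChain (hK : ∅ ∈ K.faces)
    (hface : ∀ s ∈ C, s ∈ K.faces ∧ s ≠ ∅) (hchain : ∀ s ∈ C, ∀ t ∈ C, s ⊆ t ∨ t ⊆ s) :
    C ∈ (K.partialSubdivision {s ∈ K.faces | 2 ≤ #s}).faces := by
  have hone : #(singletonPart C) ≤ 1 := card_le_one.2 fun x hx y hy => by
    rcases hchain _ (mem_singletonPart.1 hx) _ (mem_singletonPart.1 hy) with h | h
    · exact singleton_subset_singleton.1 h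
    · exact (singleton_subset_singleton.1 h).symm
  simp only [mem_partialSubdivision, mem_deleteAbove, mem_filter]
  refine ⟨fun s hs => ?_, fun s hs t ht _ => hchain s hs t ht, ?_, fun s hs h => ?_⟩
  · have := card_pos.2 (nonempty_iff_ne_empty.2 (hface s hs).2)
    exact or_iff_not_imp_left.2 fun h => ⟨(hface s hs).1, by lia⟩
  · rcases (singletonPart C).eq_empty_or_nonempty with h | h
    · rwa [h]
    · obtain ⟨x, hx⟩ := card_eq_one.1 (hone.antisymm (card_pos.2 h))
      rw [hx]
      exact (hface _ (mem_singletonPart.1 (hx ▸ mem_singleton_self x))).1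
  · have := card_le_card h
    lia

theorem partialSubdivision_two_le_card (hK : ∅ ∈ K.faces) :
    K.partialSubdivision {s ∈ K.faces | 2 ≤ #s} = (orderComplex K.FacePoset).map (.subtype _) :=
  eq_of_mem_faces_iff fun _ => by
    rw [mem_map_orderComplex_facePoset]
    exact ⟨isChain_of_mem_partialSubdivision, fun h => mem_partialSubdivision_of_isChain hK h.1 h.2⟩

theorem srDepth_orderComplex_facePoset_of_empty_mem (k : Type) [Field k] (hK : ∅ ∈ K.faces) :
    srDepth k (orderComplex K.FacePoset) = srDepth k K := by
  have hbottom : ∅ ∈ (K.partialSubdivision ∅).faces := by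
    rwa [partialSubdivision_empty, empty_mem_map]
  have htop : ∅ ∈ (K.partialSubdivision {s ∈ K.faces | 2 ≤ #s}).faces := by
    rw [partialSubdivision_two_le_card hK, empty_mem_map]
    exact empty_mem_orderComplex
  have hiff (d : ℕ) := depthGE_partialSubdivision_iff (k := k) (d := d) (K := K)
    (N := {s ∈ K.faces | 2 ≤ #s}) (fun s hs => (mem_filter.1 hs).2) (filter_subset _ _)
    fun s hs t ht hst => mem_filter.2 ⟨ht, (mem_filter.1 hs).2.trans (card_le_card hst)⟩
  calc
    srDepth k (orderComplex K.FacePoset)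
      = srDepth k (K.partialSubdivision {s ∈ K.faces | 2 ≤ #s}) := by
        rw [partialSubdivision_two_le_card hK, srDepth_map _ empty_mem_orderComplex]
    _ = srDepth k (K.partialSubdivision ∅) := by
        simp only [srDepth_eq_sSup_depthGE htop, srDepth_eq_sSup_depthGE hbottom, hiff]
    _ = srDepth k K := by rw [partialSubdivision_empty, srDepth_map _ hK]

end PartialSubdivision

theorem srDepth_of_empty_notMem (k : Type) [Field k] {V : Type} [DecidableEq V] {K : SComplex V}
    (hK : ∅ ∉ K.faces) : srDepth k K = 0 := by
  have : Subsingleton (SRRing k K) := by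
    rw [Ideal.Quotient.subsingleton_iff, Ideal.eq_top_iff_one, mem_srIdeal_iff_coeff]
    exact fun m hm => absurd (K.down_closed hm (empty_subset _)) hK
  rw [srDepth, depthIn, Set.eq_empty_of_forall_notMem (s := {n | _}), csSup_empty, bot_eq_zero]
  rintro n ⟨rs, -, -, hreg⟩
  exact hreg.2 (Subsingleton.elim _ _)

theorem srDepth_orderComplex_of_isEmpty (k : Type) [Field k] (P : Type) [DecidableEq P] [Fintype P]
    [PartialOrder P] [∀ a b : P, Decidable (a ≤ b)] [IsEmpty P] :
    srDepth k (orderComplex P) = 0 := by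
  have hfaces (S : Finset P) : ((orderComplex P).restrict S).faces = {∅} := by
    ext C
    rw [mem_restrict, mem_singleton, eq_empty_of_isEmpty C]
    exact iff_of_true ⟨empty_mem_orderComplex, empty_subset _⟩ rfl
  rw [srDepth_orderComplex, ← Nat.le_zero]
  exact Nat.sInf_le ⟨0, ∅, empty_subset _, rfl, not_hVanish_zero_of_faces_eq (hfaces _)⟩

theorem srDepth_orderComplex_facePoset (k : Type) [Field k] {V : Type} [DecidableEq V] [Fintype V]
    (K : SComplex V) : srDepth k (orderComplex K.FacePoset) = srDepth k K := by
  by_cases hK : ∅ ∈ K.faces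
  · exact srDepth_orderComplex_facePoset_of_empty_mem k hK
  · have : IsEmpty K.FacePoset := ⟨fun s => hK (K.down_closed s.2.1 (empty_subset _))⟩
    rw [srDepth_orderComplex_of_isEmpty, srDepth_of_empty_notMem k hK]

end SComplex

/-- For a finite poset `P`,
`depth k[O(P)] = min { i + |S| : S ⊆ {1, …, ht P}, H̃_{i-1}(O(P̃_S); k) ≠ 0 }`, where `P̃_S` is
the subposet of elements whose height is not in `S`.  In particular, for any simplicial complex
`Δ`, applying this formula to the face poset of `Δ` computes `depth k[Δ]`. -/
theorem poset_depth_formula (k : Type) [Field k] :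
    (∀ (P : Type) [DecidableEq P] [Fintype P] [PartialOrder P]
        [∀ a b : P, Decidable (a ≤ b)],
      SComplex.srDepth k (orderComplex P) = sInf {n : ℕ | ∃ (i : ℕ) (S : Finset ℕ),
        S ⊆ Finset.Icc 1 (pheightMax P) ∧ n = i + S.card ∧
        ¬ SComplex.HVanish k
          ((orderComplex P).restrict (Finset.univ.filter fun p => pheight p ∉ S)) i})
    ∧ (∀ (V : Type) [DecidableEq V] [Fintype V] (K : SComplex V),
      SComplex.srDepth k K = sInf {n : ℕ | ∃ (i : ℕ) (S : Finset ℕ),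
        S ⊆ Finset.Icc 1 (pheightMax K.FacePoset) ∧ n = i + S.card ∧
        ¬ SComplex.HVanish k
          ((orderComplex K.FacePoset).restrict
            (Finset.univ.filter fun p => pheight p ∉ S)) i}) := by
  refine ⟨fun P _ _ _ _ => srDepth_orderComplex k, fun V _ _ K => ?_⟩
  rw [← SComplex.srDepth_orderComplex_facePoset k K]
  exact srDepth_orderComplex k
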